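/- arXiv:2504.21430 — 6 statements merged into one kernel-verified Lean document; each statement's English description precedes it below -/
import Mathlib

section
/- Let d ≥ 1, β ∈ [1,2), and let b : ℝ^d → ℝ^d satisfy Assumption (A) with parameter θ ≥ 0. Then there exist constants c > 0 and C > 0 such that for every x ∈ ℝ^d, ⟨b(x), ∇V_β(x)⟩ ≤ −c V_β(x)^{1+θ/β} + C, where ∇V_β(x) = β(1+|x|²)^{(β−2)/2} x. -/
open scoped RealInnerProductSpace

/-! Only pairs `(x, 0)` matter: `⟪b x, x⟫ = ⟪b x - b 0, x⟫ + ⟪b 0, x⟫`. With `s = 1 + ‖x‖ ^ 2`, the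
first term is at most `-κ * s ^ (1 + θ / 2)` up to a constant, and the second, like any constant,
is at most of order `s ^ (1 / 2)`. The weight `s ^ ((β - 2) / 2)` of the gradient turns these into
`s ^ ((β + θ) / 2)`, which is `V_β ^ (1 + θ / β)`, and `s ^ ((β - 1) / 2)`. The latter exponent is
smaller because `-1 < θ`, so half of the main term absorbs the error up to a constant. -/

section RealPowers

open Filter

theorem add_rpow_le_two_rpow_mul_add {a b p : ℝ} (ha : 0 ≤ a) (hb : 0 ≤ b) (hp : 0 ≤ p) :
    (a + b) ^ p ≤ 2 ^ p * (a ^ p + b ^ p) := by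
  wlog hab : a ≤ b generalizing a b
  · simpa only [add_comm] using this hb ha (le_of_not_ge hab)
  calc (a + b) ^ p ≤ (2 * b) ^ p := by gcongr; linarith
    _ = 2 ^ p * b ^ p := Real.mul_rpow zero_le_two hb
    _ ≤ 2 ^ p * (a ^ p + b ^ p) := by
      gcongr
      exact le_add_of_nonneg_left (Real.rpow_nonneg ha p)

theorem one_add_sq_rpow_le {r q : ℝ} (hr : 0 ≤ r) (hq : 0 ≤ q) :
    (1 + r ^ 2) ^ q ≤ 2 ^ q * (1 + r ^ (2 * q)) := by
  simpa only [Real.one_rpow, Real.rpow_mul hr, Real.rpow_two] using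
    add_rpow_le_two_rpow_mul_add zero_le_one (sq_nonneg r) hq

theorem le_one_add_sq_rpow_half (r : ℝ) : r ≤ (1 + r ^ 2) ^ (1 / 2 : ℝ) := by
  rw [← Real.sqrt_eq_rpow]
  exact Real.le_sqrt_of_sq_le (by linarith)

theorem eventually_mul_rpow_le_mul_rpow {a p ε : ℝ} (hap : a < p) (hε : 0 < ε) (M : ℝ) :
    ∀ᶠ s : ℝ in atTop, M * s ^ a ≤ ε * s ^ p := by
  filter_upwards [(tendsto_rpow_atTop (sub_pos.2 hap)).eventually_ge_atTop (M / ε),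
    eventually_gt_atTop 0] with s hs hs₀
  calc M * s ^ a ≤ ε * s ^ (p - a) * s ^ a := by
        gcongr
        exact (div_le_iff₀' hε).1 hs
    _ = ε * s ^ p := by rw [mul_assoc, ← Real.rpow_add hs₀, sub_add_cancel]

theorem exists_mul_rpow_le_mul_rpow_add {a p ε : ℝ} (hap : a < p) (hε : 0 < ε) (M : ℝ) :
    ∃ C > 0, ∀ s : ℝ, 1 ≤ s → M * s ^ a ≤ ε * s ^ p + C := by
  obtain ⟨R, hR⟩ := eventually_atTop.1 (eventually_mul_rpow_le_mul_rpow hap hε M)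
  refine ⟨|M| * |R| ^ |a| + 1, by positivity, fun s hs ↦ ?_⟩
  rcases le_total R s with hRs | hsR
  · have hC : 0 ≤ |M| * |R| ^ |a| := by positivity
    linarith [hR s hRs]
  · have hbounded : M * s ^ a ≤ |M| * |R| ^ |a| := by
      gcongr
      · exact le_abs_self M
      · calc s ^ a ≤ s ^ |a| := Real.rpow_le_rpow_of_exponent_le hs (le_abs_self a)
          _ ≤ |R| ^ |a| := by
            gcongr
            exact hsR.trans (le_abs_self R)
    have hmain : 0 ≤ ε * s ^ p := by positivity
    linarith

end RealPowers

section Dissipativity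

variable {E : Type*} [NormedAddCommGroup E] [InnerProductSpace ℝ E]

theorem inner_le_neg_mul_norm_rpow_add {v x : E} {K₁ K₂ L p : ℝ} (hK₂ : 0 ≤ K₂) (hp : 0 ≤ p)
    (hnear : ‖x‖ ≤ L → ⟪v, x⟫ ≤ K₁ * ‖x‖ ^ 2) (hfar : L < ‖x‖ → ⟪v, x⟫ ≤ -K₂ * ‖x‖ ^ p) :
    ⟪v, x⟫ ≤ -K₂ * ‖x‖ ^ p + (|K₁| * L ^ 2 + K₂ * |L| ^ p) := by
  rcases le_or_gt ‖x‖ L with hxL | hLx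
  · have hquad : K₁ * ‖x‖ ^ 2 ≤ |K₁| * L ^ 2 := by
      gcongr
      exact le_abs_self K₁
    have hpow : K₂ * ‖x‖ ^ p ≤ K₂ * |L| ^ p := by
      gcongr
      exact hxL.trans (le_abs_self L)
    linarith [hnear hxL]
  · have hM : 0 ≤ |K₁| * L ^ 2 + K₂ * |L| ^ p := by positivity
    linarith [hfar hLx]

theorem inner_le_neg_mul_one_add_norm_sq_rpow_add {v v₀ x : E} {K M q : ℝ} (hK : 0 ≤ K)
    (hM : 0 ≤ M) (hq : 0 ≤ q) (h : ⟪v - v₀, x⟫ ≤ -K * ‖x‖ ^ (2 * q) + M) :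
    ⟪v, x⟫ ≤ -(K / 2 ^ q) * (1 + ‖x‖ ^ 2) ^ q +
      (K + M + ‖v₀‖) * (1 + ‖x‖ ^ 2) ^ (1 / 2 : ℝ) := by
  have hone : 1 ≤ (1 + ‖x‖ ^ 2) ^ (1 / 2 : ℝ) :=
    Real.one_le_rpow (le_add_of_nonneg_right (sq_nonneg _)) (by norm_num)
  have hpow : -‖x‖ ^ (2 * q) ≤ 1 - (1 + ‖x‖ ^ 2) ^ q / 2 ^ q := by
    linarith [(div_le_iff₀' (by positivity)).2 (one_add_sq_rpow_le (norm_nonneg x) hq)]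
  calc ⟪v, x⟫ = ⟪v - v₀, x⟫ + ⟪v₀, x⟫ := by rw [← inner_add_left, sub_add_cancel]
    _ ≤ (K * -‖x‖ ^ (2 * q) + M) + ‖v₀‖ * ‖x‖ := by
      linarith [real_inner_le_norm v₀ x]
    _ ≤ (K * (1 - (1 + ‖x‖ ^ 2) ^ q / 2 ^ q) + M) + ‖v₀‖ * (1 + ‖x‖ ^ 2) ^ (1 / 2 : ℝ) := by
      gcongr
      exact le_one_add_sq_rpow_half ‖x‖
    _ = -(K / 2 ^ q) * (1 + ‖x‖ ^ 2) ^ q + (K + M) * 1 +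
        ‖v₀‖ * (1 + ‖x‖ ^ 2) ^ (1 / 2 : ℝ) := by ring
    _ ≤ -(K / 2 ^ q) * (1 + ‖x‖ ^ 2) ^ q + (K + M) * (1 + ‖x‖ ^ 2) ^ (1 / 2 : ℝ) +
        ‖v₀‖ * (1 + ‖x‖ ^ 2) ^ (1 / 2 : ℝ) := by gcongr
    _ = _ := by ring

theorem exists_inner_smul_le_neg_mul_rpow_add {b : E → E} {β θ κ M : ℝ} (hβ : 0 < β)
    (hθ : -1 < θ) (hκ : 0 < κ)
    (h : ∀ x, ⟪b x, x⟫ ≤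
      -κ * (1 + ‖x‖ ^ 2) ^ (1 + θ / 2) + M * (1 + ‖x‖ ^ 2) ^ (1 / 2 : ℝ)) :
    ∃ c C : ℝ, 0 < c ∧ 0 < C ∧ ∀ x,
      ⟪b x, (β * (1 + ‖x‖ ^ 2) ^ ((β - 2) / 2)) • x⟫ ≤
        -c * ((1 + ‖x‖ ^ 2) ^ (β / 2)) ^ (1 + θ / β) + C := by
  obtain ⟨C, hC₀, hC⟩ := exists_mul_rpow_le_mul_rpow_add
    (show (β - 1) / 2 < (β + θ) / 2 by linarith) (show 0 < β * κ / 2 by positivity) (β * M)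
  refine ⟨β * κ / 2, C, by positivity, hC₀, fun x ↦ ?_⟩
  set s : ℝ := 1 + ‖x‖ ^ 2
  have hs : 1 ≤ s := le_add_of_nonneg_right (sq_nonneg _)
  have hs₀ : 0 < s := by positivity
  have hmain : s ^ ((β - 2) / 2) * s ^ (1 + θ / 2) = s ^ ((β + θ) / 2) := by
    rw [← Real.rpow_add hs₀]
    congr 1
    ring
  have herror : s ^ ((β - 2) / 2) * s ^ (1 / 2 : ℝ) = s ^ ((β - 1) / 2) := by
    rw [← Real.rpow_add hs₀]
    congr 1
    ring
  have hlyapunov : (s ^ (β / 2)) ^ (1 + θ / β) = s ^ ((β + θ) / 2) := by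
    rw [← Real.rpow_mul hs₀.le]
    congr 1
    field_simp
  calc ⟪b x, (β * s ^ ((β - 2) / 2)) • x⟫ = β * s ^ ((β - 2) / 2) * ⟪b x, x⟫ :=
        real_inner_smul_right _ _ _
    _ ≤ β * s ^ ((β - 2) / 2) * (-κ * s ^ (1 + θ / 2) + M * s ^ (1 / 2 : ℝ)) := by
      gcongr
      exact h x
    _ = -(β * κ) * s ^ ((β + θ) / 2) + β * M * s ^ ((β - 1) / 2) := by
      rw [← hmain, ← herror]
      ring
    _ ≤ -(β * κ / 2) * s ^ ((β + θ) / 2) + C := by linarith [hC s hs]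
    _ = -(β * κ / 2) * (s ^ (β / 2)) ^ (1 + θ / β) + C := by rw [hlyapunov]

theorem stmt2_general {b : E → E} {β θ K₁ K₂ L : ℝ} (hβ : 0 < β) (hθ : -1 < θ) (hK₂ : 0 < K₂)
    (hnear : ∀ x, ‖x‖ ≤ L → ⟪b x - b 0, x⟫ ≤ K₁ * ‖x‖ ^ 2)
    (hfar : ∀ x, L < ‖x‖ → ⟪b x - b 0, x⟫ ≤ -K₂ * ‖x‖ ^ (2 + θ)) :
    ∃ c C : ℝ, 0 < c ∧ 0 < C ∧ ∀ x,
      ⟪b x, (β * (1 + ‖x‖ ^ 2) ^ ((β - 2) / 2)) • x⟫ ≤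
        -c * ((1 + ‖x‖ ^ 2) ^ (β / 2)) ^ (1 + θ / β) + C := by
  have hcoercive (x : E) : ⟪b x - b 0, x⟫ ≤
      -K₂ * ‖x‖ ^ (2 * (1 + θ / 2)) + (|K₁| * L ^ 2 + K₂ * |L| ^ (2 + θ)) := by
    rw [show 2 * (1 + θ / 2) = 2 + θ by ring]
    exact inner_le_neg_mul_norm_rpow_add hK₂.le (by linarith) (hnear x) (hfar x)
  have hκ : 0 < K₂ / 2 ^ (1 + θ / 2) := by positivity
  exact exists_inner_smul_le_neg_mul_rpow_add hβ hθ hκ fun x ↦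
    inner_le_neg_mul_one_add_norm_sq_rpow_add hK₂.le (by positivity) (by linarith) (hcoercive x)

end Dissipativity

/-- If `b` satisfies Assumption (A) with parameter `θ ≥ 0` and `β ∈ [1,2)`, then there are
constants `c, C > 0` with `⟨b(x), ∇V_β(x)⟩ ≤ -c V_β(x)^{1+θ/β} + C` for all `x`, where
`V_β(x) = (1+|x|²)^{β/2}` and `∇V_β(x) = β(1+|x|²)^{(β-2)/2} x`. -/
theorem stmt2 (d : ℕ) (hd : 1 ≤ d) (β θ K₁ K₂ L : ℝ)
    (hβ1 : 1 ≤ β) (hβ2 : β < 2) (hθ : 0 ≤ θ) (hK₁ : 0 < K₁) (hK₂ : 0 < K₂) (hL : 0 < L)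
    (b : EuclideanSpace ℝ (Fin d) → EuclideanSpace ℝ (Fin d))
    (hb : Differentiable ℝ b)
    (hb1 : ∀ x y : EuclideanSpace ℝ (Fin d), ‖x - y‖ ≤ L →
      ⟪b x - b y, x - y⟫ ≤ K₁ * ‖x - y‖ ^ 2)
    (hb2 : ∀ x y : EuclideanSpace ℝ (Fin d), L < ‖x - y‖ →
      ⟪b x - b y, x - y⟫ ≤ -K₂ * ‖x - y‖ ^ (2 + θ)) :
    ∃ c C : ℝ, 0 < c ∧ 0 < C ∧ ∀ x : EuclideanSpace ℝ (Fin d),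
      ⟪b x, (β * (1 + ‖x‖ ^ 2) ^ ((β - 2) / 2)) • x⟫ ≤
        -c * ((1 + ‖x‖ ^ 2) ^ (β / 2)) ^ (1 + θ / β) + C :=
  stmt2_general (by linarith) (by linarith) hK₂
    (fun x ↦ by simpa only [sub_zero] using hb1 x 0)
    (fun x ↦ by simpa only [sub_zero] using hb2 x 0)
end

section
/- Let d ≥ 1, α ∈ (1,2), and β ∈ [1,2]. Then for every x ∈ ℝ^d the integral ∫_{0<|z|≤1} (V_β(x+z) − V_β(x) − ⟨∇V_β(x), z⟩) |z|^{−(α+d)} dz is absolutely convergent and satisfies ∫_{0<|z|≤1} (V_β(x+z) − V_β(x) − ⟨∇V_β(x), z⟩) |z|^{−(α+d)} dz ≤ β(3−β)√d σ_{d−1} / (2(2−α)). -/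
open MeasureTheory
open scoped RealInnerProductSpace

/-!
`V_β = φ ∘ (1 + ‖·‖²)`, where `φ t = t ^ (β / 2)` is concave for `0 ≤ β ≤ 2` with slope at most
`β / 2` on `[1, ∞)`. Replace `φ` by its tangent at `1 + ‖x‖²`: since
`‖x + z‖² - ‖x‖² = 2⟪x, z⟫ + ‖z‖²` and the inner product is absorbed by `⟪∇V_β x, z⟫`, the Taylor
remainder of `V_β` is at most `β / 2 * ‖z‖²`. A quadratic lower bound for `φ` shows that it is
`O(‖z‖²)` as `z → 0`. In polar coordinates, `‖z‖² * ‖z‖ ^ (-(α + d))` has integral `σ / (2 - α)`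
over the unit ball, which gives the constant `β * σ / (2 * (2 - α))`; finally `1 ≤ (3 - β) * √d`.
-/

open Module Set

section Bernoulli

variable {a p s u : ℝ}

lemma one_add_mul_self_sub_le_rpow_one_add (hs : -1 ≤ s) (hp0 : 0 ≤ p) (hp1 : p ≤ 1) :
    1 + p * s - (1 - p) * s ^ 2 ≤ (1 + s) ^ p := by
  have hs0 : 0 ≤ 1 + s := by linarith
  have hpow : 0 ≤ (1 + s) ^ p := Real.rpow_nonneg hs0 p
  have hfactor : 1 + p * s - (1 - p) * s ^ 2 = (1 + s) * (1 - (1 - p) * s) := by ring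
  rw [hfactor]
  rcases le_total (1 - (1 - p) * s) 0 with hneg | hpos
  · exact (mul_nonpos_of_nonneg_of_nonpos hs0 hneg).trans hpow
  have hbernoulli : (1 + s) ^ (1 - p) ≤ 1 + (1 - p) * s :=
    rpow_one_add_le_one_add_mul_self hs (by linarith) (by linarith)
  have hsplit : (1 + s) ^ p * (1 + s) ^ (1 - p) = 1 + s := by
    rw [← Real.rpow_add_of_nonneg hs0 hp0 (by linarith), add_sub_cancel, Real.rpow_one]
  calc (1 + s) * (1 - (1 - p) * s)
      = (1 + s) ^ p * ((1 + s) ^ (1 - p) * (1 - (1 - p) * s)) := by rw [← mul_assoc, hsplit]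
    _ ≤ (1 + s) ^ p * ((1 + (1 - p) * s) * (1 - (1 - p) * s)) := by gcongr
    _ ≤ (1 + s) ^ p * 1 := by gcongr; linarith [sq_nonneg ((1 - p) * s)]
    _ = (1 + s) ^ p := mul_one _

lemma add_rpow_eq_mul_one_add_div_rpow (ha : 0 < a) (hu : 0 ≤ a + u) :
    (a + u) ^ p = a ^ p * (1 + u / a) ^ p := by
  have hquot : 1 + u / a = (a + u) / a := by field_simp
  rw [hquot, Real.div_rpow hu ha.le, mul_div_cancel₀ _ (Real.rpow_pos_of_pos ha p).ne']

lemma neg_one_le_div_of_add_nonneg (ha : 0 < a) (hu : 0 ≤ a + u) : -1 ≤ u / a := by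
  rw [le_div_iff₀ ha]
  linarith

lemma add_rpow_le_rpow_add_mul (ha : 0 < a) (hu : 0 ≤ a + u) (hp0 : 0 ≤ p) (hp1 : p ≤ 1) :
    (a + u) ^ p ≤ a ^ p + p * a ^ (p - 1) * u := by
  calc (a + u) ^ p = a ^ p * (1 + u / a) ^ p := add_rpow_eq_mul_one_add_div_rpow ha hu
    _ ≤ a ^ p * (1 + p * (u / a)) := by
      gcongr
      exact rpow_one_add_le_one_add_mul_self (neg_one_le_div_of_add_nonneg ha hu) hp0 hp1
    _ = a ^ p + p * a ^ (p - 1) * u := by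
      rw [Real.rpow_sub_one ha.ne']
      ring

lemma rpow_add_mul_sub_le_add_rpow (ha : 0 < a) (hu : 0 ≤ a + u) (hp0 : 0 ≤ p) (hp1 : p ≤ 1) :
    a ^ p + p * a ^ (p - 1) * u - (1 - p) * a ^ (p - 2) * u ^ 2 ≤ (a + u) ^ p := by
  calc a ^ p + p * a ^ (p - 1) * u - (1 - p) * a ^ (p - 2) * u ^ 2
      = a ^ p * (1 + p * (u / a) - (1 - p) * (u / a) ^ 2) := by
        rw [Real.rpow_sub_one ha.ne', Real.rpow_sub ha, Real.rpow_two]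
        ring
    _ ≤ a ^ p * (1 + u / a) ^ p := by
      gcongr
      exact one_add_mul_self_sub_le_rpow_one_add (neg_one_le_div_of_add_nonneg ha hu) hp0 hp1
    _ = (a + u) ^ p := (add_rpow_eq_mul_one_add_div_rpow ha hu).symm

end Bernoulli

section PowerWeights

variable {c p q r y : ℝ}

lemma eqOn_pow_sub_one_smul_rpow {n : ℕ} (hn : 0 < n) (p : ℝ) :
    EqOn (fun r : ℝ => r ^ (n - 1) • r ^ p) (fun r => r ^ (p + n - 1)) (Ioi 0) := by
  intro r (hr : 0 < r)
  simp only [smul_eq_mul]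
  rw [← Real.rpow_natCast, ← Real.rpow_add hr, Nat.cast_pred hn]
  congr 1
  ring

lemma mul_rpow_le_mul_rpow_add (hr : 0 < r) (hy : y ≤ c * r ^ q) :
    y * r ^ p ≤ c * r ^ (q + p) := by
  rw [Real.rpow_add hr, ← mul_assoc]
  gcongr

end PowerWeights

/-- The remainder of the first-order Taylor expansion of `f` at `x`, for the increment `z`.
Integrated against a jump kernel, it is the small-jump part of a jump generator. -/
noncomputable def taylorRemainder {E : Type*} [NormedAddCommGroup E] [NormedSpace ℝ E]
    (f : E → ℝ) (x z : E) : ℝ :=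
  f (x + z) - f x - fderiv ℝ f x z

/-- The Lyapunov function `V_β`, a smooth version of `‖x‖ ^ β` to which a jump generator is
applied. -/
noncomputable def lyapunov {E : Type*} [NormedAddCommGroup E] (β : ℝ) (x : E) : ℝ :=
  (1 + ‖x‖ ^ 2) ^ (β / 2)

section Lyapunov

lemma one_add_norm_sq_rpow_le_one {E : Type*} [NormedAddCommGroup E] {q : ℝ}
    (hq : q ≤ 0) (x : E) : (1 + ‖x‖ ^ 2) ^ q ≤ 1 :=
  Real.rpow_le_one_of_one_le_of_nonpos (le_add_of_nonneg_right (sq_nonneg _)) hq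

variable {E : Type*} [NormedAddCommGroup E] [InnerProductSpace ℝ E] {β : ℝ}

lemma hasFDerivAt_lyapunov (β : ℝ) (x : E) :
    HasFDerivAt (lyapunov β) (innerSL ℝ ((β * (1 + ‖x‖ ^ 2) ^ ((β - 2) / 2)) • x)) x := by
  have hsq : HasFDerivAt (fun y : E => 1 + ‖y‖ ^ 2) (2 • innerSL ℝ x) x :=
    (hasStrictFDerivAt_norm_sq x).hasFDerivAt.const_add 1
  have hbase : 1 + ‖x‖ ^ 2 ≠ 0 := by positivity
  refine (hsq.rpow_const (p := β / 2) (Or.inl hbase)).congr_fderiv ?_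
  rw [map_smul, ← Nat.cast_smul_eq_nsmul ℝ, smul_smul, show (β - 2) / 2 = β / 2 - 1 by ring]
  congr 1
  push_cast
  ring

lemma taylorRemainder_lyapunov (β : ℝ) (x z : E) :
    taylorRemainder (lyapunov β) x z =
      (1 + ‖x + z‖ ^ 2) ^ (β / 2) - (1 + ‖x‖ ^ 2) ^ (β / 2) -
        ⟪(β * (1 + ‖x‖ ^ 2) ^ ((β - 2) / 2)) • x, z⟫ := by
  rw [taylorRemainder, (hasFDerivAt_lyapunov β x).fderiv, innerSL_apply_apply, lyapunov, lyapunov]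

lemma taylorRemainder_lyapunov_eq_add (β : ℝ) (x z : E) :
    taylorRemainder (lyapunov β) x z =
      (1 + ‖x‖ ^ 2 + (2 * ⟪x, z⟫ + ‖z‖ ^ 2)) ^ (β / 2) - (1 + ‖x‖ ^ 2) ^ (β / 2) -
        β / 2 * (1 + ‖x‖ ^ 2) ^ (β / 2 - 1) * (2 * ⟪x, z⟫ + ‖z‖ ^ 2) +
        β / 2 * (1 + ‖x‖ ^ 2) ^ (β / 2 - 1) * ‖z‖ ^ 2 := by
  rw [taylorRemainder_lyapunov, real_inner_smul_left, norm_add_sq_real,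
    show (β - 2) / 2 = β / 2 - 1 by ring, add_assoc (‖x‖ ^ 2), ← add_assoc 1]
  ring

lemma one_add_norm_sq_add_nonneg (x z : E) : 0 ≤ 1 + ‖x‖ ^ 2 + (2 * ⟪x, z⟫ + ‖z‖ ^ 2) := by
  have hexpand : ‖x + z‖ ^ 2 = ‖x‖ ^ 2 + 2 * ⟪x, z⟫ + ‖z‖ ^ 2 := norm_add_sq_real x z
  linarith [sq_nonneg ‖x + z‖]

lemma taylorRemainder_lyapunov_le (hβ0 : 0 ≤ β) (hβ2 : β ≤ 2) (x z : E) :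
    taylorRemainder (lyapunov β) x z ≤ β / 2 * ‖z‖ ^ 2 := by
  have htangent := add_rpow_le_rpow_add_mul (by positivity) (one_add_norm_sq_add_nonneg x z)
    (p := β / 2) (by linarith) (by linarith)
  calc taylorRemainder (lyapunov β) x z
      ≤ β / 2 * (1 + ‖x‖ ^ 2) ^ (β / 2 - 1) * ‖z‖ ^ 2 := by
        rw [taylorRemainder_lyapunov_eq_add]
        linarith
    _ ≤ β / 2 * 1 * ‖z‖ ^ 2 := by
      gcongr
      exact one_add_norm_sq_rpow_le_one (by linarith) x
    _ = β / 2 * ‖z‖ ^ 2 := by rw [mul_one]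

lemma neg_sq_le_taylorRemainder_lyapunov (hβ0 : 0 ≤ β) (hβ2 : β ≤ 2) (x z : E) :
    -(2 * ⟪x, z⟫ + ‖z‖ ^ 2) ^ 2 ≤ taylorRemainder (lyapunov β) x z := by
  have hlower := rpow_add_mul_sub_le_add_rpow (by positivity) (one_add_norm_sq_add_nonneg x z)
    (p := β / 2) (by linarith) (by linarith)
  have hcoeff : (1 - β / 2) * (1 + ‖x‖ ^ 2) ^ (β / 2 - 2) ≤ 1 :=
    mul_le_one₀ (by linarith) (by positivity) (one_add_norm_sq_rpow_le_one (by linarith) x)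
  have hquad := mul_le_mul_of_nonneg_right hcoeff (sq_nonneg (2 * ⟪x, z⟫ + ‖z‖ ^ 2))
  have hlast : 0 ≤ β / 2 * (1 + ‖x‖ ^ 2) ^ (β / 2 - 1) * ‖z‖ ^ 2 := by positivity
  rw [taylorRemainder_lyapunov_eq_add]
  linarith

lemma abs_two_mul_inner_add_norm_sq_le (x : E) {z : E} (hz : ‖z‖ ≤ 1) :
    |2 * ⟪x, z⟫ + ‖z‖ ^ 2| ≤ (2 * ‖x‖ + 1) * ‖z‖ := by
  calc |2 * ⟪x, z⟫ + ‖z‖ ^ 2| ≤ |2 * ⟪x, z⟫| + |‖z‖ ^ 2| := abs_add_le _ _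
    _ = 2 * |⟪x, z⟫| + ‖z‖ * ‖z‖ := by rw [abs_mul, abs_two, abs_sq, sq]
    _ ≤ 2 * (‖x‖ * ‖z‖) + 1 * ‖z‖ := by
      gcongr
      exact abs_real_inner_le_norm x z
    _ = (2 * ‖x‖ + 1) * ‖z‖ := by ring

lemma abs_taylorRemainder_lyapunov_le (hβ0 : 0 ≤ β) (hβ2 : β ≤ 2) (x : E) {z : E}
    (hz : ‖z‖ ≤ 1) :
    |taylorRemainder (lyapunov β) x z| ≤ (2 * ‖x‖ + 1) ^ 2 * ‖z‖ ^ 2 := by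
  refine abs_le.2 ⟨?_, ?_⟩
  · refine le_trans ?_ (neg_sq_le_taylorRemainder_lyapunov hβ0 hβ2 x z)
    rw [← mul_pow, neg_le_neg_iff, ← sq_abs (2 * ⟪x, z⟫ + ‖z‖ ^ 2)]
    gcongr
    exact abs_two_mul_inner_add_norm_sq_le x hz
  · refine (taylorRemainder_lyapunov_le hβ0 hβ2 x z).trans ?_
    have hone : 1 ≤ (2 * ‖x‖ + 1) ^ 2 := one_le_pow₀ (by linarith [norm_nonneg x])
    gcongr
    linarith

end Lyapunov

section Polar

variable {E F : Type*} [NormedAddCommGroup E] [NormedSpace ℝ E] [FiniteDimensional ℝ E]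
  [Nontrivial E] [MeasurableSpace E] [BorelSpace E] [NormedAddCommGroup F] [NormedSpace ℝ F]
  (μ : Measure E) [μ.IsAddHaarMeasure]

lemma integrableOn_fun_norm_preimage_iff {f : ℝ → F} {s : Set ℝ}
    (hs : MeasurableSet s) (hs0 : s ⊆ Ioi 0) :
    IntegrableOn (fun z => f ‖z‖) (norm ⁻¹' s : Set E) μ ↔
      IntegrableOn (fun r => r ^ (finrank ℝ E - 1) • f r) s := by
  have hind : indicator (norm ⁻¹' s) (fun z : E => f ‖z‖) = fun z => s.indicator f ‖z‖ := rfl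
  rw [← integrable_indicator_iff (measurable_norm hs), hind, integrable_fun_norm_addHaar,
    ← indicator_smul, integrableOn_indicator_iff hs, inter_eq_left.2 hs0]

lemma setIntegral_fun_norm_preimage (f : ℝ → F) {s : Set ℝ}
    (hs : MeasurableSet s) (hs0 : s ⊆ Ioi 0) :
    ∫ z in (norm ⁻¹' s : Set E), f ‖z‖ ∂μ =
      μ.toSphere.real univ • ∫ r in s, r ^ (finrank ℝ E - 1) • f r := by
  have hind : indicator (norm ⁻¹' s) (fun z : E => f ‖z‖) = fun z => s.indicator f ‖z‖ := rfl
  rw [← integral_indicator (measurable_norm hs), hind, integral_fun_norm_addHaar,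
    ← indicator_smul, setIntegral_indicator hs, inter_eq_right.2 hs0,
    Measure.toSphere_real_apply_univ, ← Nat.cast_smul_eq_nsmul ℝ, smul_smul]

variable {p q c R : ℝ}

lemma integrableOn_norm_rpow (hp : 0 < p + finrank ℝ E) :
    IntegrableOn (fun z => ‖z‖ ^ p) (norm ⁻¹' Ioc 0 R : Set E) μ := by
  rw [integrableOn_fun_norm_preimage_iff μ (f := (· ^ p)) measurableSet_Ioc Ioc_subset_Ioi_self,
    integrableOn_congr_fun ((eqOn_pow_sub_one_smul_rpow finrank_pos p).mono Ioc_subset_Ioi_self)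
      measurableSet_Ioc]
  exact (intervalIntegral.intervalIntegrable_rpow' (by linarith)).1

lemma setIntegral_norm_rpow (hR : 0 ≤ R) (hp : 0 < p + finrank ℝ E) :
    ∫ z in (norm ⁻¹' Ioc 0 R : Set E), ‖z‖ ^ p ∂μ =
      μ.toSphere.real univ * (R ^ (p + finrank ℝ E) / (p + finrank ℝ E)) := by
  rw [setIntegral_fun_norm_preimage μ (· ^ p) measurableSet_Ioc Ioc_subset_Ioi_self,
    setIntegral_congr_fun measurableSet_Ioc
      ((eqOn_pow_sub_one_smul_rpow finrank_pos p).mono Ioc_subset_Ioi_self),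
    ← intervalIntegral.integral_of_le hR, integral_rpow (Or.inl (by linarith)), sub_add_cancel,
    Real.zero_rpow hp.ne', sub_zero, smul_eq_mul]

variable {f : E → ℝ}

lemma integrableOn_mul_norm_rpow
    (hf : AEStronglyMeasurable f (μ.restrict (norm ⁻¹' Ioc 0 R)))
    (hbound : ∀ z ∈ (norm ⁻¹' Ioc 0 R : Set E), |f z| ≤ c * ‖z‖ ^ q)
    (hqp : 0 < q + p + finrank ℝ E) :
    IntegrableOn (fun z => f z * ‖z‖ ^ p) (norm ⁻¹' Ioc 0 R) μ := by
  refine ((integrableOn_norm_rpow μ hqp).const_mul c).mono'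
    (hf.mul (by fun_prop : Measurable fun z : E => ‖z‖ ^ p).aestronglyMeasurable) ?_
  refine ae_restrict_of_forall_mem (measurable_norm measurableSet_Ioc) fun z hz => ?_
  rw [norm_mul, Real.norm_eq_abs, Real.norm_of_nonneg (by positivity : 0 ≤ ‖z‖ ^ p)]
  exact mul_rpow_le_mul_rpow_add hz.1 (hbound z hz)

lemma setIntegral_mul_norm_rpow_le (hR : 0 ≤ R)
    (hint : IntegrableOn (fun z => f z * ‖z‖ ^ p) (norm ⁻¹' Ioc 0 R) μ)
    (hbound : ∀ z ∈ (norm ⁻¹' Ioc 0 R : Set E), f z ≤ c * ‖z‖ ^ q)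
    (hqp : 0 < q + p + finrank ℝ E) :
    ∫ z in norm ⁻¹' Ioc 0 R, f z * ‖z‖ ^ p ∂μ ≤
      c * (μ.toSphere.real univ * (R ^ (q + p + finrank ℝ E) / (q + p + finrank ℝ E))) := by
  calc ∫ z in norm ⁻¹' Ioc 0 R, f z * ‖z‖ ^ p ∂μ
      ≤ ∫ z in (norm ⁻¹' Ioc 0 R : Set E), c * ‖z‖ ^ (q + p) ∂μ :=
      setIntegral_mono_on hint ((integrableOn_norm_rpow μ hqp).const_mul c)
        (measurable_norm measurableSet_Ioc) fun z hz => mul_rpow_le_mul_rpow_add hz.1 (hbound z hz)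
    _ = _ := by rw [integral_const_mul, setIntegral_norm_rpow μ hR hqp]

end Polar

lemma volume_toSphere_real_univ {E : Type*} [NormedAddCommGroup E] [InnerProductSpace ℝ E]
    [FiniteDimensional ℝ E] [Nontrivial E] [MeasurableSpace E] [BorelSpace E] :
    (volume : Measure E).toSphere.real univ =
      2 * Real.pi ^ ((finrank ℝ E : ℝ) / 2) / Real.Gamma ((finrank ℝ E : ℝ) / 2) := by
  have hdim : (0 : ℝ) < finrank ℝ E := Nat.cast_pos.2 finrank_pos
  have : 0 < Real.Gamma ((finrank ℝ E : ℝ) / 2) := Real.Gamma_pos_of_pos (by positivity)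
  have hpi : √Real.pi ^ finrank ℝ E = Real.pi ^ ((finrank ℝ E : ℝ) / 2) := by
    rw [Real.rpow_div_two_eq_sqrt _ Real.pi_pos.le, Real.rpow_natCast]
  rw [Measure.toSphere_real_apply_univ, Measure.real, InnerProductSpace.volume_ball,
    ENNReal.ofReal_one, one_pow, one_mul, Real.Gamma_add_one (by positivity),
    ENNReal.toReal_ofReal (by positivity), hpi]
  field_simp

lemma mul_div_le_mul_three_sub_mul_sqrt_mul_div {b c β t : ℝ} (hβ0 : 0 ≤ β) (hβ2 : β ≤ 2)
    (ht : 1 ≤ t) (hc : 0 ≤ c) (hb : 0 ≤ b) :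
    β * c / b ≤ β * (3 - β) * √t * c / b := by
  have hfactor : 1 ≤ (3 - β) * √t :=
    one_le_mul_of_one_le_of_one_le (by linarith) (Real.one_le_sqrt.2 ht)
  gcongr
  rw [mul_assoc]
  exact le_mul_of_one_le_right hβ0 hfactor

theorem stmt3_general {E : Type*} [NormedAddCommGroup E] [InnerProductSpace ℝ E]
    [FiniteDimensional ℝ E] [Nontrivial E] [MeasurableSpace E] [BorelSpace E]
    (μ : Measure E) [μ.IsAddHaarMeasure] {α β : ℝ} (hα : α < 2) (hβ0 : 0 ≤ β) (hβ2 : β ≤ 2)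
    (x : E) :
    IntegrableOn (fun z => taylorRemainder (lyapunov β) x z * ‖z‖ ^ (-(α + finrank ℝ E)))
      {z | 0 < ‖z‖ ∧ ‖z‖ ≤ 1} μ ∧
    ∫ z in {z | 0 < ‖z‖ ∧ ‖z‖ ≤ 1},
        taylorRemainder (lyapunov β) x z * ‖z‖ ^ (-(α + finrank ℝ E)) ∂μ ≤
      β * μ.toSphere.real univ / (2 * (2 - α)) := by
  have hexponent : 2 + -(α + finrank ℝ E) + finrank ℝ E = 2 - α := by ring
  have hpos : 0 < 2 + -(α + finrank ℝ E) + finrank ℝ E := by linarith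
  have hmeas : Measurable (taylorRemainder (lyapunov β) x) := by
    simp only [funext (taylorRemainder_lyapunov β x)]
    fun_prop
  have hint := integrableOn_mul_norm_rpow μ (R := 1) hmeas.aestronglyMeasurable
    (fun z hz => (abs_taylorRemainder_lyapunov_le hβ0 hβ2 x hz.2).trans_eq
      (by rw [Real.rpow_two])) hpos
  refine ⟨hint, (setIntegral_mul_norm_rpow_le μ zero_le_one hint
    (fun z _ => (taylorRemainder_lyapunov_le hβ0 hβ2 x z).trans_eq
      (by rw [Real.rpow_two])) hpos).trans_eq ?_⟩
  rw [hexponent, Real.one_rpow]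
  field_simp

/-- For `α ∈ (1,2)`, `β ∈ [1,2]` and any `x ∈ ℝ^d`, the small-jump integral
`∫_{0<|z|≤1} (V_β(x+z) - V_β(x) - ⟨∇V_β(x), z⟩) |z|^{-(α+d)} dz` is absolutely convergent and
bounded above by `β(3-β)√d σ_{d-1} / (2(2-α))`, where `V_β(x) = (1+|x|²)^{β/2}`,
`∇V_β(x) = β(1+|x|²)^{(β-2)/2} x` and `σ_{d-1} = 2π^{d/2}/Γ(d/2)`. -/
theorem stmt3 (d : ℕ) (hd : 1 ≤ d) (α β : ℝ) (hα1 : 1 < α) (hα2 : α < 2)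
    (hβ1 : 1 ≤ β) (hβ2 : β ≤ 2) (x : EuclideanSpace ℝ (Fin d)) :
    IntegrableOn
      (fun z : EuclideanSpace ℝ (Fin d) =>
        ((1 + ‖x + z‖ ^ 2) ^ (β / 2) - (1 + ‖x‖ ^ 2) ^ (β / 2) -
          ⟪(β * (1 + ‖x‖ ^ 2) ^ ((β - 2) / 2)) • x, z⟫) * ‖z‖ ^ (-(α + d)))
      {z : EuclideanSpace ℝ (Fin d) | 0 < ‖z‖ ∧ ‖z‖ ≤ 1} ∧
    ∫ z in {z : EuclideanSpace ℝ (Fin d) | 0 < ‖z‖ ∧ ‖z‖ ≤ 1},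
        ((1 + ‖x + z‖ ^ 2) ^ (β / 2) - (1 + ‖x‖ ^ 2) ^ (β / 2) -
          ⟪(β * (1 + ‖x‖ ^ 2) ^ ((β - 2) / 2)) • x, z⟫) * ‖z‖ ^ (-(α + d))
      ≤ β * (3 - β) * Real.sqrt d *
          (2 * Real.pi ^ ((d : ℝ) / 2) / Real.Gamma ((d : ℝ) / 2)) / (2 * (2 - α)) := by
  have : Nonempty (Fin d) := ⟨⟨0, hd⟩⟩
  have hgeneral := stmt3_general (volume : Measure (EuclideanSpace ℝ (Fin d))) hα2 (by linarith)
    hβ2 x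
  simp only [taylorRemainder_lyapunov, volume_toSphere_real_univ, finrank_euclideanSpace_fin]
    at hgeneral
  exact hgeneral.imp_right fun hle => hle.trans (mul_div_le_mul_three_sub_mul_sqrt_mul_div
    (by linarith) hβ2 (Nat.one_le_cast.2 hd) (by positivity) (by linarith))
end

section
/- Let γ, C₁, C₂ > 0. There exists a constant C > 0, depending only on γ, C₁, C₂, such that for every differentiable function g : [0,∞) → [1,∞) satisfying g'(t) ≤ −C₁ g(t)^{1+γ} + C₂ for all t ≥ 0, one has g(t) ≤ C for all t ≥ 1. In particular the bound holds uniformly in the initial value g(0). -/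
/-!
For `c > 0` the function `y t = (c + γ C₁ t) ^ (-1/γ)` solves `y' = -C₁ y ^ (1 + γ)`, and it is at
most `(γ C₁ t) ^ (-1/γ)` however large `y 0 = c ^ (-1/γ)` is. Since `x ↦ x ^ (1 + γ)` is
superadditive, `M + y` is a strict supersolution of `g' = -C₁ g ^ (1 + γ) + C₂` as soon as
`C₂ < C₁ M ^ (1 + γ)`. Hence `g` stays below `M + y`, and `M` may decrease to
`(C₂ / C₁) ^ (1 / (1 + γ))`.
-/

open Set

theorem hasDerivAt_add_mul_rpow_neg_inv {γ k c t : ℝ} (hγ : γ ≠ 0) (ht : 0 < c + γ * k * t) :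
    HasDerivAt (fun s => (c + γ * k * s) ^ (-γ⁻¹))
      (-k * ((c + γ * k * t) ^ (-γ⁻¹)) ^ (1 + γ)) t := by
  have hlin : HasDerivAt (fun s => c + γ * k * s) (γ * k) t := by
    simpa only [mul_one, id] using ((hasDerivAt_id t).const_mul (γ * k)).const_add c
  have hexp : -γ⁻¹ * (1 + γ) = -γ⁻¹ - 1 := by field_simp; ring
  convert hlin.rpow_const (p := -γ⁻¹) (Or.inl ht.ne') using 1
  rw [← Real.rpow_mul ht.le, hexp]
  field_simp

theorem neg_mul_add_rpow_add_lt {p k C M y : ℝ} (hp : 1 ≤ p) (hk : 0 ≤ k) (hM : 0 ≤ M)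
    (hCM : C < k * M ^ p) (hy : 0 ≤ y) : -k * (M + y) ^ p + C < -k * y ^ p := by
  have hsuper : k * (M ^ p + y ^ p) ≤ k * (M + y) ^ p :=
    mul_le_mul_of_nonneg_left (Real.add_rpow_le_rpow_add hM hy hp) hk
  linarith

theorem le_add_of_deriv_right_le_neg_mul_rpow_add {g g' y y' : ℝ → ℝ} {a b p k C M : ℝ}
    (hp : 1 ≤ p) (hk : 0 ≤ k) (hM : 0 < M) (hCM : C < k * M ^ p)
    (hg : ContinuousOn g (Icc a b))
    (hg' : ∀ x ∈ Ico a b, HasDerivWithinAt g (g' x) (Ici x) x)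
    (hgle : ∀ x ∈ Ico a b, 0 < g x → g' x ≤ -k * g x ^ p + C)
    (hy : ContinuousOn y (Icc a b))
    (hy' : ∀ x ∈ Ico a b, HasDerivWithinAt y (y' x) (Ici x) x)
    (hy_nonneg : ∀ x ∈ Ico a b, 0 ≤ y x) (hyle : ∀ x ∈ Ico a b, -k * y x ^ p ≤ y' x)
    (ha : g a ≤ M + y a) ⦃x : ℝ⦄ (hx : x ∈ Icc a b) : g x ≤ M + y x := by
  refine image_le_of_deriv_right_lt_deriv_boundary' (B := fun s => M + y s) hg hg' ha
    (continuousOn_const.add hy) (fun s hs => (hy' s hs).const_add M) (fun s hs hcontact => ?_) hx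
  have hg_pos : 0 < g s := hcontact ▸ add_pos_of_pos_of_nonneg hM (hy_nonneg s hs)
  calc g' s ≤ -k * g s ^ p + C := hgle s hs hg_pos
    _ = -k * (M + y s) ^ p + C := by rw [hcontact]
    _ < -k * y s ^ p := neg_mul_add_rpow_add_lt hp hk hM.le hCM (hy_nonneg s hs)
    _ ≤ y' s := hyle s hs

theorem exists_pos_le_rpow_neg_inv {γ : ℝ} (hγ : γ ≠ 0) (v : ℝ) :
    ∃ c : ℝ, 0 < c ∧ v ≤ c ^ (-γ⁻¹) := by
  have hmax : 0 < max v 1 := lt_max_of_lt_right one_pos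
  refine ⟨max v 1 ^ (-γ), Real.rpow_pos_of_pos hmax _, ?_⟩
  rw [← inv_neg, Real.rpow_rpow_inv hmax.le (neg_ne_zero.2 hγ)]
  exact le_max_left v 1

theorem le_add_rpow_neg_inv_of_lt_mul_rpow {γ C₁ C₂ M t₀ t : ℝ} {g g' : ℝ → ℝ}
    (hγ : 0 < γ) (hC₁ : 0 < C₁) (hM : 0 < M) (hCM : C₂ < C₁ * M ^ (1 + γ))
    (hg : ContinuousOn g (Ici 0))
    (hg' : ∀ s, 0 ≤ s → HasDerivWithinAt g (g' s) (Ici s) s)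
    (hle : ∀ s, 0 ≤ s → 0 < g s → g' s ≤ -C₁ * g s ^ (1 + γ) + C₂)
    (ht₀ : 0 < t₀) (ht : t₀ ≤ t) : g t ≤ M + (γ * C₁ * t₀) ^ (-γ⁻¹) := by
  obtain ⟨c, hc, hgc⟩ := exists_pos_le_rpow_neg_inv hγ.ne' (g 0)
  have hpos : ∀ s, 0 ≤ s → 0 < c + γ * C₁ * s := fun s hs => by positivity
  have hderiv := fun s hs => hasDerivAt_add_mul_rpow_neg_inv hγ.ne' (hpos s hs)
  have hinit : g 0 ≤ M + (c + γ * C₁ * 0) ^ (-γ⁻¹) := by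
    rw [mul_zero, add_zero]
    linarith
  have hcompare : g t ≤ M + (c + γ * C₁ * t) ^ (-γ⁻¹) :=
    le_add_of_deriv_right_le_neg_mul_rpow_add (by linarith) hC₁.le hM hCM
      (hg.mono Icc_subset_Ici_self) (fun s hs => hg' s hs.1) (fun s hs => hle s hs.1)
      (fun s hs => (hderiv s hs.1).continuousAt.continuousWithinAt)
      (fun s hs => (hderiv s hs.1).hasDerivWithinAt)
      (fun s hs => Real.rpow_nonneg (hpos s hs.1).le _) (fun _ _ => le_rfl)
      hinit ⟨ht₀.le.trans ht, le_rfl⟩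
  have hbase : γ * C₁ * t₀ ≤ c + γ * C₁ * t :=
    (mul_le_mul_of_nonneg_left ht (by positivity)).trans (le_add_of_nonneg_left hc.le)
  have hdecay : (c + γ * C₁ * t) ^ (-γ⁻¹) ≤ (γ * C₁ * t₀) ^ (-γ⁻¹) :=
    Real.rpow_le_rpow_of_nonpos (by positivity) hbase (neg_nonpos.2 (inv_nonneg.2 hγ.le))
  linarith

theorem stmt7_general {γ C₁ C₂ t₀ t : ℝ} {g g' : ℝ → ℝ}
    (hγ : 0 < γ) (hC₁ : 0 < C₁) (hC₂ : 0 ≤ C₂)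
    (hg : ContinuousOn g (Ici 0))
    (hg' : ∀ s, 0 ≤ s → HasDerivWithinAt g (g' s) (Ici s) s)
    (hle : ∀ s, 0 ≤ s → 0 < g s → g' s ≤ -C₁ * g s ^ (1 + γ) + C₂)
    (ht₀ : 0 < t₀) (ht : t₀ ≤ t) :
    g t ≤ (C₂ / C₁) ^ (1 + γ)⁻¹ + (γ * C₁ * t₀) ^ (-γ⁻¹) := by
  have hroot : 0 ≤ (C₂ / C₁) ^ (1 + γ)⁻¹ := by positivity
  suffices hM : g t - (γ * C₁ * t₀) ^ (-γ⁻¹) ≤ (C₂ / C₁) ^ (1 + γ)⁻¹ from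
    sub_le_iff_le_add.1 hM
  refine le_of_forall_gt_imp_ge_of_dense fun M hM => ?_
  have hM_pos : 0 < M := hroot.trans_lt hM
  have hCM : C₂ < C₁ * M ^ (1 + γ) := by
    rwa [Real.rpow_inv_lt_iff_of_pos (by positivity) hM_pos.le (by positivity),
      div_lt_iff₀' hC₁] at hM
  exact sub_le_iff_le_add.2
    (le_add_rpow_neg_inv_of_lt_mul_rpow hγ hC₁ hM_pos hCM hg hg' hle ht₀ ht)

/-- Uniform-in-initial-condition bound: for `γ, C₁, C₂ > 0` there is `C > 0`, depending only on
`γ, C₁, C₂`, such that every differentiable `g : [0,∞) → [1,∞)` with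
`g'(t) ≤ -C₁ g(t)^{1+γ} + C₂` for all `t ≥ 0` satisfies `g(t) ≤ C` for all `t ≥ 1`. -/
theorem stmt7 (γ C₁ C₂ : ℝ) (hγ : 0 < γ) (hC₁ : 0 < C₁) (hC₂ : 0 < C₂) :
    ∃ C : ℝ, 0 < C ∧ ∀ g g' : ℝ → ℝ,
      (∀ t, 0 ≤ t → 1 ≤ g t) →
      (∀ t, 0 ≤ t → HasDerivWithinAt g (g' t) (Set.Ici 0) t) →
      (∀ t, 0 ≤ t → g' t ≤ -C₁ * g t ^ (1 + γ) + C₂) →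
      ∀ t, 1 ≤ t → g t ≤ C :=
  ⟨(C₂ / C₁) ^ (1 + γ)⁻¹ + (γ * C₁ * 1) ^ (-γ⁻¹), by positivity, fun _ _ _ hd hle _ ht =>
    stmt7_general hγ hC₁ hC₂.le (fun s hs => (hd s hs).continuousWithinAt)
      (fun s hs => (hd s hs).mono (Ici_subset_Ici.2 hs)) (fun s hs _ => hle s hs) one_pos ht⟩
end

section
/- Let d ≥ 1 and θ ≥ 0, and define b : ℝ^d → ℝ^d by b(x) = −x|x|^θ. Then b satisfies Assumption (A) with parameter θ: there exist constants K₁, K₂, L > 0 such that ⟨b(x)−b(y), x−y⟩ ≤ K₁|x−y|² whenever |x−y| ≤ L, and ⟨b(x)−b(y), x−y⟩ ≤ −K₂|x−y|^{2+θ} whenever |x−y| > L. -/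
open scoped RealInnerProductSpace

/-!
The inner product `⟪a • x - b • y, x - y⟫` is the average of `a` and `b` times `‖x - y‖ ^ 2`, plus
a multiple of `(a - b) * (‖x‖ ^ 2 - ‖y‖ ^ 2)`. The second term is nonnegative when the weights
`a = φ ‖x‖` and `b = φ ‖y‖` come from a monotone profile `φ`. Since one of `x`, `y` has norm at
least `‖x - y‖ / 2`, the average is at least `φ (‖x - y‖ / 2) / 2`. For `φ r = r ^ θ` this bounds
the inner product below by a multiple of `‖x - y‖ ^ (2 + θ)` for all `x` and `y`, near or far.
-/

section RadialField

variable {E : Type*} [SeminormedAddCommGroup E] {φ : ℝ → ℝ}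

theorem apply_half_norm_sub_le_add (hφ : MonotoneOn φ (Set.Ici 0))
    (hφ_nonneg : ∀ r, 0 ≤ r → 0 ≤ φ r) (x y : E) :
    φ (‖x - y‖ / 2) ≤ φ ‖x‖ + φ ‖y‖ := by
  have hhalf : 0 ≤ ‖x - y‖ / 2 := by positivity
  have htri : ‖x - y‖ ≤ ‖x‖ + ‖y‖ := norm_sub_le x y
  rcases le_total ‖x‖ ‖y‖ with hxy | hyx
  · exact (hφ hhalf (norm_nonneg y) (by linarith)).trans
      (le_add_of_nonneg_left (hφ_nonneg _ (norm_nonneg x)))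
  · exact (hφ hhalf (norm_nonneg x) (by linarith)).trans
      (le_add_of_nonneg_right (hφ_nonneg _ (norm_nonneg y)))

variable [InnerProductSpace ℝ E]

theorem inner_smul_sub_smul_sub_eq (a b : ℝ) (x y : E) :
    ⟪a • x - b • y, x - y⟫ =
      (a + b) / 2 * ‖x - y‖ ^ 2 + (a - b) * (‖x‖ ^ 2 - ‖y‖ ^ 2) / 2 := by
  rw [norm_sub_sq_real]
  simp only [inner_sub_left, inner_sub_right, real_inner_smul_left,
    real_inner_self_eq_norm_sq, real_inner_comm x y]
  ring

theorem average_mul_norm_sub_sq_le_inner_radial_sub (hφ : MonotoneOn φ (Set.Ici 0)) (x y : E) :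
    (φ ‖x‖ + φ ‖y‖) / 2 * ‖x - y‖ ^ 2 ≤ ⟪φ ‖x‖ • x - φ ‖y‖ • y, x - y⟫ := by
  have hmonovary : MonovaryOn φ (· ^ 2) (Set.Ici 0) := hφ.monovaryOn pow_left_monotoneOn
  have hcross : 0 ≤ (φ ‖x‖ - φ ‖y‖) * (‖x‖ ^ 2 - ‖y‖ ^ 2) :=
    monovaryOn_iff_forall_mul_nonneg.1 hmonovary (norm_nonneg y) (norm_nonneg x)
  rw [inner_smul_sub_smul_sub_eq]
  exact le_add_of_nonneg_right (div_nonneg hcross zero_le_two)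

theorem apply_half_norm_sub_mul_norm_sub_sq_le_inner_radial_sub
    (hφ : MonotoneOn φ (Set.Ici 0)) (hφ_nonneg : ∀ r, 0 ≤ r → 0 ≤ φ r) (x y : E) :
    φ (‖x - y‖ / 2) / 2 * ‖x - y‖ ^ 2 ≤ ⟪φ ‖x‖ • x - φ ‖y‖ • y, x - y⟫ :=
  calc
    φ (‖x - y‖ / 2) / 2 * ‖x - y‖ ^ 2 ≤ (φ ‖x‖ + φ ‖y‖) / 2 * ‖x - y‖ ^ 2 := by
      gcongr
      exact apply_half_norm_sub_le_add hφ hφ_nonneg x y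
    _ ≤ ⟪φ ‖x‖ • x - φ ‖y‖ • y, x - y⟫ := average_mul_norm_sub_sq_le_inner_radial_sub hφ x y

end RadialField

theorem half_rpow_half_mul_sq {r θ : ℝ} (hr : 0 ≤ r) (hθ : 0 ≤ θ) :
    (r / 2) ^ θ / 2 * r ^ 2 = (1 / 2) ^ (θ + 1) * r ^ (2 + θ) := by
  rw [Real.rpow_add_one (by norm_num), Real.rpow_add_of_nonneg hr zero_le_two hθ, Real.rpow_two,
    div_eq_mul_one_div r 2, Real.mul_rpow hr (by norm_num)]
  ring

section Dissipativity

variable {E : Type*} [SeminormedAddCommGroup E] [InnerProductSpace ℝ E]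

theorem norm_sub_rpow_le_inner_norm_rpow_smul_sub {θ : ℝ} (hθ : 0 ≤ θ) (x y : E) :
    (1 / 2) ^ (θ + 1) * ‖x - y‖ ^ (2 + θ) ≤ ⟪‖x‖ ^ θ • x - ‖y‖ ^ θ • y, x - y⟫ := by
  rw [← half_rpow_half_mul_sq (norm_nonneg _) hθ]
  exact apply_half_norm_sub_mul_norm_sub_sq_le_inner_radial_sub
    (Real.monotoneOn_rpow_Ici_of_exponent_nonneg hθ) (fun _ hr => Real.rpow_nonneg hr θ) x y

/-- The two inequalities of Assumption (A) for a drift `b`: one-sided Lipschitz at short distance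
and dissipative of order `2 + θ` at long distance. The differentiability of `b` is not included. -/
def IsDissipativeAtLongDistance (b : E → E) (θ : ℝ) : Prop :=
  ∃ K₁ K₂ L : ℝ, 0 < K₁ ∧ 0 < K₂ ∧ 0 < L ∧
    (∀ x y : E, ‖x - y‖ ≤ L → ⟪b x - b y, x - y⟫ ≤ K₁ * ‖x - y‖ ^ 2) ∧
    (∀ x y : E, L < ‖x - y‖ → ⟪b x - b y, x - y⟫ ≤ -K₂ * ‖x - y‖ ^ (2 + θ))

theorem isDissipativeAtLongDistance_of_forall_inner_le {b : E → E} {K θ : ℝ} (hK : 0 < K)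
    (hb : ∀ x y : E, ⟪b x - b y, x - y⟫ ≤ -K * ‖x - y‖ ^ (2 + θ)) :
    IsDissipativeAtLongDistance b θ := by
  refine ⟨1, K, 1, one_pos, hK, one_pos, fun x y _ => ?_, fun x y _ => hb x y⟩
  calc
    ⟪b x - b y, x - y⟫ ≤ -K * ‖x - y‖ ^ (2 + θ) := hb x y
    _ ≤ 0 := mul_nonpos_of_nonpos_of_nonneg (neg_nonpos.2 hK.le) (by positivity)
    _ ≤ 1 * ‖x - y‖ ^ 2 := by positivity

theorem stmt10_general {θ : ℝ} (hθ : 0 ≤ θ) (x y : E) :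
    ⟪(-(‖x‖ ^ θ) • x) - (-(‖y‖ ^ θ) • y), x - y⟫ ≤
      -(1 / 2) ^ (θ + 1) * ‖x - y‖ ^ (2 + θ) := by
  rw [neg_smul, neg_smul, ← neg_sub', inner_neg_left, neg_mul]
  exact neg_le_neg (norm_sub_rpow_le_inner_norm_rpow_smul_sub hθ x y)

end Dissipativity

/-- The drift `b(x) = -x|x|^θ` on `ℝ^d` satisfies Assumption (A) with parameter `θ ≥ 0`:
there exist `K₁, K₂, L > 0` with `⟨b(x)-b(y), x-y⟩ ≤ K₁|x-y|²` whenever `|x-y| ≤ L`, and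
`⟨b(x)-b(y), x-y⟩ ≤ -K₂|x-y|^{2+θ}` whenever `|x-y| > L`. -/
theorem stmt10 (d : ℕ) (hd : 1 ≤ d) (θ : ℝ) (hθ : 0 ≤ θ) :
    ∃ K₁ K₂ L : ℝ, 0 < K₁ ∧ 0 < K₂ ∧ 0 < L ∧
      (∀ x y : EuclideanSpace ℝ (Fin d), ‖x - y‖ ≤ L →
        ⟪(-(‖x‖ ^ θ) • x) - (-(‖y‖ ^ θ) • y), x - y⟫ ≤ K₁ * ‖x - y‖ ^ 2) ∧
      (∀ x y : EuclideanSpace ℝ (Fin d), L < ‖x - y‖ →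
        ⟪(-(‖x‖ ^ θ) • x) - (-(‖y‖ ^ θ) • y), x - y⟫ ≤ -K₂ * ‖x - y‖ ^ (2 + θ)) :=
  isDissipativeAtLongDistance_of_forall_inner_le (b := fun x => -(‖x‖ ^ θ) • x)
    (by positivity) (stmt10_general hθ)
end

section
/- Let d ≥ 1, α ∈ (1,2), and 0 < β < α/2. Let f : ℝ^d → ℝ be continuously differentiable with |f(x)| ≤ C₀(1+|x|²)^{β/2} and |∇f(x)| ≤ C₀(1+|x|²)^{β/2} for all x ∈ ℝ^d and some constant C₀ > 0, and let μ be a probability measure on ℝ^d with ∫_{ℝ^d} |x|^{2β} μ(dx) < ∞. Then the asymptotic variance V(f) := ∫_{ℝ^d} ∫_{ℝ^d∖{0}} [f(x+z) − f(x)]² C_{d,α} |z|^{−(α+d)} dz μ(dx) is finite, and moreover V(f) ≤ C (1 + ∫ |x|^{2β} μ(dx)) for some constant C > 0 independent of μ. -/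
open MeasureTheory

/-!
Write `⟨x⟩ = (1 + ‖x‖²)^{1/2}`. A step of length at most `r`, with `r ≥ 1`, multiplies the weight
`⟨·⟩^β` by at most `(2r)^β`. For `‖z‖ ≤ 1` the mean value inequality on the unit ball around `x`
therefore bounds `f (x + z) - f x` by a multiple of `⟨x⟩^β ‖z‖`, and for `‖z‖ > 1` the two values
separately are bounded by a multiple of `⟨x⟩^β ‖z‖^β`. After squaring, the dependence on `z` is
integrable against the stable kernel at the origin because `α < 2` and at infinity because
`2 * β < α`, while the dependence on `x` is `⟨x⟩^{2β}`, whose `μ`-integral is controlled by the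
moment of order `2 * β`.
-/

section Growth

variable {E F : Type*} [NormedAddCommGroup E] [NormedAddCommGroup F]

theorem one_add_norm_add_sq_le {x z : E} {r : ℝ} (hr : 1 ≤ r) (hz : ‖z‖ ≤ r) :
    1 + ‖x + z‖ ^ 2 ≤ (2 * r) ^ 2 * (1 + ‖x‖ ^ 2) := by
  have hr_sq : 1 ≤ r ^ 2 := one_le_pow₀ hr
  calc 1 + ‖x + z‖ ^ 2 ≤ 1 + (‖x‖ + r) ^ 2 := by
        gcongr
        exact (norm_add_le x z).trans (by gcongr)
    _ ≤ (2 * r) ^ 2 * (1 + ‖x‖ ^ 2) := by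
        nlinarith [sq_nonneg (‖x‖ - r), mul_le_mul_of_nonneg_right hr_sq (sq_nonneg ‖x‖)]

theorem one_add_norm_add_sq_rpow_le {β : ℝ} (hβ : 0 ≤ β) {x z : E} {r : ℝ} (hr : 1 ≤ r)
    (hz : ‖z‖ ≤ r) :
    (1 + ‖x + z‖ ^ 2) ^ (β / 2) ≤ (2 * r) ^ β * (1 + ‖x‖ ^ 2) ^ (β / 2) := by
  calc (1 + ‖x + z‖ ^ 2) ^ (β / 2) ≤ ((2 * r) ^ 2 * (1 + ‖x‖ ^ 2)) ^ (β / 2) := by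
        gcongr
        exact one_add_norm_add_sq_le hr hz
    _ = (2 * r) ^ β * (1 + ‖x‖ ^ 2) ^ (β / 2) := by
        rw [Real.mul_rpow (by positivity) (by positivity),
          ← Real.rpow_natCast_mul (by positivity), Nat.cast_ofNat, mul_div_cancel₀ β two_ne_zero]

theorem one_add_norm_sq_rpow_half_sq_le {β : ℝ} (hβ : 0 ≤ β) (x : E) :
    ((1 + ‖x‖ ^ 2) ^ (β / 2)) ^ 2 ≤ 2 ^ β * (1 + ‖x‖ ^ (2 * β)) := by
  calc ((1 + ‖x‖ ^ 2) ^ (β / 2)) ^ 2 = (1 + ‖x‖ ^ 2) ^ β := by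
        rw [← Real.rpow_mul_natCast (by positivity), Nat.cast_ofNat, div_mul_cancel₀ β two_ne_zero]
    _ ≤ (2 * max 1 (‖x‖ ^ 2)) ^ β := by
        gcongr
        linarith [le_max_left 1 (‖x‖ ^ 2), le_max_right 1 (‖x‖ ^ 2)]
    _ = 2 ^ β * max 1 (‖x‖ ^ (2 * β)) := by
        rw [Real.mul_rpow zero_le_two (by positivity), Real.rpow_max zero_le_one (by positivity) hβ,
          Real.one_rpow, ← Real.rpow_natCast_mul (norm_nonneg x), Nat.cast_ofNat]
    _ ≤ 2 ^ β * (1 + ‖x‖ ^ (2 * β)) := by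
        gcongr
        exact max_le_add_of_nonneg zero_le_one (by positivity)

/-- The order in `t = ‖z‖` of the increments `f (x + z) - f x` of a function `f` satisfying
`HasC1Growth β C`: linear for short steps, `t ^ β` for long ones. -/
noncomputable def jumpModulus (β t : ℝ) : ℝ := if t ≤ 1 then t else t ^ β

variable [NormedSpace ℝ E] [NormedSpace ℝ F]

/-- The weighted class `C¹_β`: differentiable functions whose values and derivative are bounded by
`C ⟨x⟩^β`, where `⟨x⟩ = (1 + ‖x‖²)^{1/2}`. The derivative need not be continuous. -/
structure HasC1Growth (β C : ℝ) (f : E → F) : Prop where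
  differentiable : Differentiable ℝ f
  norm_le : ∀ x, ‖f x‖ ≤ C * (1 + ‖x‖ ^ 2) ^ (β / 2)
  norm_fderiv_le : ∀ x, ‖fderiv ℝ f x‖ ≤ C * (1 + ‖x‖ ^ 2) ^ (β / 2)

namespace HasC1Growth

variable {β C : ℝ} {f : E → F}

theorem of_gradient {H : Type*} [NormedAddCommGroup H] [InnerProductSpace ℝ H] [CompleteSpace H]
    {g : H → ℝ} (hg : Differentiable ℝ g) (norm_le : ∀ x, ‖g x‖ ≤ C * (1 + ‖x‖ ^ 2) ^ (β / 2))
    (norm_gradient_le : ∀ x, ‖gradient g x‖ ≤ C * (1 + ‖x‖ ^ 2) ^ (β / 2)) :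
    HasC1Growth β C g :=
  ⟨hg, norm_le, by simpa only [gradient, LinearIsometryEquiv.norm_map] using norm_gradient_le⟩

theorem const_nonneg (hf : HasC1Growth β C f) : 0 ≤ C := by
  simpa using (norm_nonneg _).trans (hf.norm_le 0)

theorem norm_sub_le_of_norm_le_one (hf : HasC1Growth β C f) (hβ : 0 ≤ β) (x : E) {z : E}
    (hz : ‖z‖ ≤ 1) :
    ‖f (x + z) - f x‖ ≤ 2 ^ β * C * (1 + ‖x‖ ^ 2) ^ (β / 2) * ‖z‖ := by
  have hC := hf.const_nonneg
  have fderiv_bound : ∀ y ∈ Metric.closedBall x 1,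
      ‖fderiv ℝ f y‖ ≤ 2 ^ β * C * (1 + ‖x‖ ^ 2) ^ (β / 2) := by
    intro y hy
    have weight_le := one_add_norm_add_sq_rpow_le hβ (x := x) le_rfl (mem_closedBall_iff_norm.1 hy)
    rw [add_sub_cancel, mul_one] at weight_le
    calc ‖fderiv ℝ f y‖ ≤ C * (1 + ‖y‖ ^ 2) ^ (β / 2) := hf.norm_fderiv_le y
      _ ≤ C * (2 ^ β * (1 + ‖x‖ ^ 2) ^ (β / 2)) := by gcongr
      _ = 2 ^ β * C * (1 + ‖x‖ ^ 2) ^ (β / 2) := by ring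
  have hxz : x + z ∈ Metric.closedBall x 1 := by simpa [mem_closedBall_iff_norm] using hz
  simpa only [add_sub_cancel_left] using
    (convex_closedBall x 1).norm_image_sub_le_of_norm_fderiv_le (fun y _ => hf.differentiable y)
      fderiv_bound (Metric.mem_closedBall_self zero_le_one) hxz

theorem norm_sub_le_of_one_le_norm (hf : HasC1Growth β C f) (hβ : 0 ≤ β) (x : E) {z : E}
    (hz : 1 ≤ ‖z‖) :
    ‖f (x + z) - f x‖ ≤ 2 * 2 ^ β * C * (1 + ‖x‖ ^ 2) ^ (β / 2) * ‖z‖ ^ β := by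
  have hC := hf.const_nonneg
  have one_le_two_mul_rpow : 1 ≤ (2 * ‖z‖) ^ β := Real.one_le_rpow (by linarith) hβ
  calc ‖f (x + z) - f x‖ ≤ ‖f (x + z)‖ + ‖f x‖ := norm_sub_le _ _
    _ ≤ C * (1 + ‖x + z‖ ^ 2) ^ (β / 2) + C * (1 + ‖x‖ ^ 2) ^ (β / 2) :=
        add_le_add (hf.norm_le _) (hf.norm_le _)
    _ ≤ C * ((2 * ‖z‖) ^ β * (1 + ‖x‖ ^ 2) ^ (β / 2)) +
          C * ((2 * ‖z‖) ^ β * (1 + ‖x‖ ^ 2) ^ (β / 2)) := by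
        gcongr
        · exact one_add_norm_add_sq_rpow_le hβ hz le_rfl
        · exact le_mul_of_one_le_left (by positivity) one_le_two_mul_rpow
    _ = 2 * 2 ^ β * C * (1 + ‖x‖ ^ 2) ^ (β / 2) * ‖z‖ ^ β := by
        rw [Real.mul_rpow zero_le_two (norm_nonneg z)]
        ring

theorem norm_sub_le (hf : HasC1Growth β C f) (hβ : 0 ≤ β) (x z : E) :
    ‖f (x + z) - f x‖ ≤
      2 * 2 ^ β * C * (1 + ‖x‖ ^ 2) ^ (β / 2) * jumpModulus β ‖z‖ := by
  have hC := hf.const_nonneg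
  rcases le_or_gt ‖z‖ 1 with hz | hz
  · rw [jumpModulus, if_pos hz]
    refine (hf.norm_sub_le_of_norm_le_one hβ x hz).trans ?_
    gcongr
    exact le_mul_of_one_le_left (by positivity) one_le_two
  · rw [jumpModulus, if_neg hz.not_ge]
    exact hf.norm_sub_le_of_one_le_norm hβ x hz.le

theorem sq_norm_sub_le (hf : HasC1Growth β C f) (hβ : 0 ≤ β) (x z : E) :
    ‖f (x + z) - f x‖ ^ 2 ≤
      4 * 8 ^ β * C ^ 2 * (1 + ‖x‖ ^ (2 * β)) * jumpModulus β ‖z‖ ^ 2 := by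
  calc ‖f (x + z) - f x‖ ^ 2
      ≤ (2 * 2 ^ β * C * (1 + ‖x‖ ^ 2) ^ (β / 2) * jumpModulus β ‖z‖) ^ 2 := by
        gcongr
        exact hf.norm_sub_le hβ x z
    _ = 4 * (2 ^ β * 2 ^ β) * C ^ 2 * ((1 + ‖x‖ ^ 2) ^ (β / 2)) ^ 2 * jumpModulus β ‖z‖ ^ 2 := by
        ring
    _ ≤ 4 * (2 ^ β * 2 ^ β) * C ^ 2 * (2 ^ β * (1 + ‖x‖ ^ (2 * β))) * jumpModulus β ‖z‖ ^ 2 := by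
        gcongr
        exact one_add_norm_sq_rpow_half_sq_le hβ x
    _ = 4 * 8 ^ β * C ^ 2 * (1 + ‖x‖ ^ (2 * β)) * jumpModulus β ‖z‖ ^ 2 := by
        have eight_rpow : (8 : ℝ) ^ β = 2 ^ β * 2 ^ β * 2 ^ β := by
          rw [← Real.mul_rpow zero_le_two zero_le_two, ← Real.mul_rpow (by norm_num) zero_le_two]
          norm_num
        rw [eight_rpow]
        ring

theorem norm_sq_sub_mul_le {f : E → ℝ} (hf : HasC1Growth β C f) (hβ : 0 ≤ β) (k : E → ℝ)
    (x z : E) :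
    ‖(f (x + z) - f x) ^ 2 * k z‖ ≤
      4 * 8 ^ β * C ^ 2 * (1 + ‖x‖ ^ (2 * β)) * ‖jumpModulus β ‖z‖ ^ 2 * k z‖ := by
  rw [norm_mul, norm_mul, norm_pow, Real.norm_of_nonneg (sq_nonneg (jumpModulus β ‖z‖)),
    ← mul_assoc]
  gcongr
  exact hf.sq_norm_sub_le hβ x z

end HasC1Growth

end Growth

section Energy

variable {E : Type*} [NormedAddCommGroup E] [MeasurableSpace E]

/-- The carré du champ `∫ (f(x+z) - f(x))² k(z) ν(dz)` of the pure jump process with Lévy measure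
`k ν`, without the customary factor `1/2`; its `μ`-integral is the asymptotic variance `V(f)`. The
density `k` is kept apart from `ν` so that it can be real-valued. -/
noncomputable def carreDuChamp (ν : Measure E) (k : E → ℝ) (f : E → ℝ) (x : E) : ℝ :=
  ∫ z, (f (x + z) - f x) ^ 2 * k z ∂ν

variable {ν : Measure E} {k f : E → ℝ}

theorem aestronglyMeasurable_sq_sub_mul [BorelSpace E] (hf : Measurable f)
    (hk : AEStronglyMeasurable k ν) (x : E) :
    AEStronglyMeasurable (fun z => (f (x + z) - f x) ^ 2 * k z) ν :=
  Measurable.aestronglyMeasurable (by fun_prop) |>.mul hk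

theorem aestronglyMeasurable_carreDuChamp [BorelSpace E] [SecondCountableTopology E] [SFinite ν]
    (hf : Measurable f) (hk : AEStronglyMeasurable k ν) (μ : Measure E) :
    AEStronglyMeasurable (carreDuChamp ν k f) μ := by
  have increment : Measurable fun p : E × E => (f (p.1 + p.2) - f p.1) ^ 2 := by fun_prop
  exact (increment.aestronglyMeasurable.mul hk.comp_snd).integral_prod_right'

namespace HasC1Growth

variable [NormedSpace ℝ E] {β C : ℝ}

theorem norm_carreDuChamp_le (hf : HasC1Growth β C f) (hβ : 0 ≤ β)
    (hk_int : Integrable (fun z => jumpModulus β ‖z‖ ^ 2 * k z) ν) (x : E) :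
    ‖carreDuChamp ν k f x‖ ≤
      4 * 8 ^ β * C ^ 2 * (∫ z, ‖jumpModulus β ‖z‖ ^ 2 * k z‖ ∂ν) * (1 + ‖x‖ ^ (2 * β)) := by
  calc ‖carreDuChamp ν k f x‖
      ≤ ∫ z, 4 * 8 ^ β * C ^ 2 * (1 + ‖x‖ ^ (2 * β)) * ‖jumpModulus β ‖z‖ ^ 2 * k z‖ ∂ν :=
        norm_integral_le_of_norm_le (hk_int.norm.const_mul _)
          (.of_forall (hf.norm_sq_sub_mul_le hβ k x))
    _ = _ := by rw [integral_const_mul]; ring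

theorem integrable_sq_sub_mul [BorelSpace E] (hf : HasC1Growth β C f) (hβ : 0 ≤ β)
    (hk : AEStronglyMeasurable k ν)
    (hk_int : Integrable (fun z => jumpModulus β ‖z‖ ^ 2 * k z) ν) (x : E) :
    Integrable (fun z => (f (x + z) - f x) ^ 2 * k z) ν :=
  (hk_int.norm.const_mul _).mono'
    (aestronglyMeasurable_sq_sub_mul hf.differentiable.continuous.measurable hk x)
    (.of_forall (hf.norm_sq_sub_mul_le hβ k x))

variable {μ : Measure E} [IsFiniteMeasure μ]

theorem integral_carreDuChamp_le (hf : HasC1Growth β C f) (hβ : 0 ≤ β)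
    (hk_int : Integrable (fun z => jumpModulus β ‖z‖ ^ 2 * k z) ν)
    (hμ : Integrable (fun x => ‖x‖ ^ (2 * β)) μ) :
    ∫ x, carreDuChamp ν k f x ∂μ ≤
      4 * 8 ^ β * C ^ 2 * (∫ z, ‖jumpModulus β ‖z‖ ^ 2 * k z‖ ∂ν) *
        (μ.real Set.univ + ∫ x, ‖x‖ ^ (2 * β) ∂μ) := by
  set A := 4 * 8 ^ β * C ^ 2 * ∫ z, ‖jumpModulus β ‖z‖ ^ 2 * k z‖ ∂ν
  calc ∫ x, carreDuChamp ν k f x ∂μ ≤ ‖∫ x, carreDuChamp ν k f x ∂μ‖ := Real.le_norm_self _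
    _ ≤ ∫ x, A * (1 + ‖x‖ ^ (2 * β)) ∂μ :=
        norm_integral_le_of_norm_le (((integrable_const 1).add hμ).const_mul A)
          (.of_forall (hf.norm_carreDuChamp_le hβ hk_int))
    _ = A * (μ.real Set.univ + ∫ x, ‖x‖ ^ (2 * β) ∂μ) := by
        rw [integral_const_mul, integral_add (integrable_const 1) hμ, integral_const, smul_eq_mul,
          mul_one]

theorem integrable_carreDuChamp [BorelSpace E] [SecondCountableTopology E] [SFinite ν]
    (hf : HasC1Growth β C f) (hβ : 0 ≤ β) (hk : AEStronglyMeasurable k ν)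
    (hk_int : Integrable (fun z => jumpModulus β ‖z‖ ^ 2 * k z) ν)
    (hμ : Integrable (fun x => ‖x‖ ^ (2 * β)) μ) :
    Integrable (carreDuChamp ν k f) μ :=
  (((integrable_const 1).add hμ).const_mul _).mono'
    (aestronglyMeasurable_carreDuChamp hf.differentiable.continuous.measurable hk μ)
    (.of_forall (hf.norm_carreDuChamp_le hβ hk_int))

end HasC1Growth

end Energy

section StableKernel

variable {α β : ℝ}

theorem pow_pred_mul_rpow_sq_mul_rpow {n : ℕ} (hn : 1 ≤ n) {r : ℝ} (hr : 0 < r) (s : ℝ) :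
    r ^ (n - 1) * ((r ^ s) ^ 2 * r ^ (-(α + n))) = r ^ (2 * s - α - 1) := by
  rw [← Real.rpow_natCast r (n - 1), ← Real.rpow_mul_natCast hr.le, ← Real.rpow_add hr,
    ← Real.rpow_add hr, Nat.cast_sub hn]
  congr 1
  push_cast
  ring

theorem integrableOn_pow_pred_mul_jumpModulus_sq_mul_rpow {n : ℕ} (hn : 1 ≤ n) (hα : α < 2)
    (hβ : β < α / 2) :
    IntegrableOn (fun r : ℝ => r ^ (n - 1) * (jumpModulus β r ^ 2 * r ^ (-(α + n))))
      (Set.Ioi 0) := by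
  rw [← Set.Ioc_union_Ioi_eq_Ioi zero_le_one]
  refine IntegrableOn.union ?_ ?_
  · have near_zero : IntegrableOn (fun r : ℝ => r ^ (2 * 1 - α - 1)) (Set.Ioc 0 1) := by
      rw [← intervalIntegrable_iff_integrableOn_Ioc_of_le zero_le_one]
      exact intervalIntegral.intervalIntegrable_rpow' (by linarith)
    refine near_zero.congr_fun (fun r ⟨hr_pos, hr_le⟩ => ?_) measurableSet_Ioc
    simp only [jumpModulus, if_pos hr_le, ← pow_pred_mul_rpow_sq_mul_rpow hn hr_pos, Real.rpow_one]
  · have near_infinity : IntegrableOn (fun r : ℝ => r ^ (2 * β - α - 1)) (Set.Ioi 1) :=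
      integrableOn_Ioi_rpow_of_lt (by linarith) one_pos
    refine near_infinity.congr_fun (fun r (hr : 1 < r) => ?_) measurableSet_Ioi
    simp only [jumpModulus, if_neg hr.not_ge,
      ← pow_pred_mul_rpow_sq_mul_rpow hn (one_pos.trans hr)]

variable {E : Type*} [NormedAddCommGroup E] [NormedSpace ℝ E] [FiniteDimensional ℝ E]
  [MeasurableSpace E] [BorelSpace E] (m : Measure E) [m.IsAddHaarMeasure]

theorem integrable_jumpModulus_sq_mul_norm_rpow (hα : α < 2) (hβ : β < α / 2) :
    Integrable (fun z : E => jumpModulus β ‖z‖ ^ 2 * ‖z‖ ^ (-(α + Module.finrank ℝ E))) m := by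
  rcases subsingleton_or_nontrivial E with _ | _
  · exact .of_subsingleton
  · exact (integrable_fun_norm_addHaar m
      (f := fun r => jumpModulus β r ^ 2 * r ^ (-(α + Module.finrank ℝ E)))).2
      (integrableOn_pow_pred_mul_jumpModulus_sq_mul_rpow Module.finrank_pos hα hβ)

theorem stmt12_general (hα : α < 2) (hβ₀ : 0 ≤ β) (hβ : β < α / 2) (c : ℝ) {C₀ : ℝ} {f : E → ℝ}
    (hf : HasC1Growth β C₀ f) :
    ∃ C : ℝ, 0 < C ∧ ∀ (μ : Measure E) [IsFiniteMeasure μ],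
      Integrable (fun x => ‖x‖ ^ (2 * β)) μ →
      (∀ x, IntegrableOn
        (fun z => (f (x + z) - f x) ^ 2 * (c * ‖z‖ ^ (-(α + Module.finrank ℝ E)))) {z | z ≠ 0} m) ∧
      Integrable (carreDuChamp (m.restrict {z | z ≠ 0})
        (fun z => c * ‖z‖ ^ (-(α + Module.finrank ℝ E))) f) μ ∧
      ∫ x, carreDuChamp (m.restrict {z | z ≠ 0})
          (fun z => c * ‖z‖ ^ (-(α + Module.finrank ℝ E))) f x ∂μ ≤
        C * (μ.real Set.univ + ∫ x, ‖x‖ ^ (2 * β) ∂μ) := by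
  set k : E → ℝ := fun z => c * ‖z‖ ^ (-(α + Module.finrank ℝ E)) with hk_def
  have hk : AEStronglyMeasurable k (m.restrict {z | z ≠ 0}) :=
    Measurable.aestronglyMeasurable (by fun_prop)
  have hk_int : IntegrableOn (fun z => jumpModulus β ‖z‖ ^ 2 * k z) {z | z ≠ 0} m := by
    simpa only [hk_def, mul_left_comm] using
      ((integrable_jumpModulus_sq_mul_norm_rpow m hα hβ).const_mul c).integrableOn
  refine ⟨4 * 8 ^ β * C₀ ^ 2 * (∫ z in {z | z ≠ 0}, ‖jumpModulus β ‖z‖ ^ 2 * k z‖ ∂m) + 1,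
    by positivity, fun μ _ hμ => ⟨hf.integrable_sq_sub_mul hβ₀ hk hk_int,
      hf.integrable_carreDuChamp hβ₀ hk hk_int hμ,
      (hf.integral_carreDuChamp_le hβ₀ hk_int hμ).trans ?_⟩⟩
  gcongr
  exact le_add_of_nonneg_right zero_le_one

end StableKernel

/-- Finiteness of the asymptotic variance: for `α ∈ (1,2)`, `0 < β < α/2`, and `f ∈ C¹(ℝ^d)`
with `|f(x)| ≤ C₀(1+|x|²)^{β/2}` and `|∇f(x)| ≤ C₀(1+|x|²)^{β/2}`, there is `C > 0`,
independent of `μ`, such that for every probability measure `μ` on `ℝ^d` with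
`∫ |x|^{2β} μ(dx) < ∞`, the variance
`V(f) = ∫∫ [f(x+z)-f(x)]² C_{d,α} |z|^{-(α+d)} dz μ(dx)` is finite and
`V(f) ≤ C (1 + ∫ |x|^{2β} μ(dx))`. -/
theorem stmt12 (d : ℕ) (hd : 1 ≤ d) (α β C₀ : ℝ) (hα1 : 1 < α) (hα2 : α < 2)
    (hβ0 : 0 < β) (hβ : β < α / 2) (hC₀ : 0 < C₀)
    (f : EuclideanSpace ℝ (Fin d) → ℝ) (hf : ContDiff ℝ 1 f)
    (hfb : ∀ x, |f x| ≤ C₀ * (1 + ‖x‖ ^ 2) ^ (β / 2))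
    (hgb : ∀ x, ‖gradient f x‖ ≤ C₀ * (1 + ‖x‖ ^ 2) ^ (β / 2)) :
    ∃ C : ℝ, 0 < C ∧ ∀ (μ : Measure (EuclideanSpace ℝ (Fin d))), IsProbabilityMeasure μ →
      Integrable (fun x : EuclideanSpace ℝ (Fin d) => ‖x‖ ^ (2 * β)) μ →
      (∀ x : EuclideanSpace ℝ (Fin d),
        IntegrableOn
          (fun z : EuclideanSpace ℝ (Fin d) => (f (x + z) - f x) ^ 2 *
            ((α * (2 : ℝ) ^ (α - 1) * Real.pi ^ (-(d : ℝ) / 2) *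
              Real.Gamma ((d + α) / 2) / Real.Gamma (1 - α / 2)) * ‖z‖ ^ (-(α + d))))
          {z : EuclideanSpace ℝ (Fin d) | z ≠ 0}) ∧
      Integrable (fun x : EuclideanSpace ℝ (Fin d) =>
        ∫ z in {z : EuclideanSpace ℝ (Fin d) | z ≠ 0},
          (f (x + z) - f x) ^ 2 *
            ((α * (2 : ℝ) ^ (α - 1) * Real.pi ^ (-(d : ℝ) / 2) *
              Real.Gamma ((d + α) / 2) / Real.Gamma (1 - α / 2)) * ‖z‖ ^ (-(α + d)))) μ ∧
      ∫ x, (∫ z in {z : EuclideanSpace ℝ (Fin d) | z ≠ 0},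
          (f (x + z) - f x) ^ 2 *
            ((α * (2 : ℝ) ^ (α - 1) * Real.pi ^ (-(d : ℝ) / 2) *
              Real.Gamma ((d + α) / 2) / Real.Gamma (1 - α / 2)) * ‖z‖ ^ (-(α + d)))) ∂μ
        ≤ C * (1 + ∫ x, ‖x‖ ^ (2 * β) ∂μ) := by
  obtain ⟨C, hC, hbound⟩ := stmt12_general volume hα2 hβ0.le hβ _
    (.of_gradient (hf.differentiable one_ne_zero) hfb hgb)
  exact ⟨C, hC, fun μ _ hμ => by
    simpa only [finrank_euclideanSpace_fin, probReal_univ] using! hbound μ hμ⟩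
end

section
/- Let d ≥ 1, α ∈ (1,2), and 0 < β < α/4. Let f : ℝ^d → ℝ be continuously differentiable, and suppose there is a constant C₀ > 0 such that |f(x)| ≤ C₀(1+|x|²)^{β/2} and |∇f(x)| ≤ C₀(1+|x|²)^{β/2} for all x ∈ ℝ^d. Then there exists a constant C > 0 such that for every x ∈ ℝ^d, ∫_{ℝ^d∖{0}} [f(x+z) − f(x)]⁴ C_{d,α} |z|^{−(α+d)} dz ≤ C (1 + |x|^{4β}), the integral being finite. -/
open MeasureTheory

/-!
The weight `(1 + ‖x‖ ^ 2) ^ (β / 2)` is submultiplicative up to a constant, so the growth bound on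
`f` (for `1 ≤ ‖z‖`) and the mean value inequality (for `‖z‖ ≤ 1`) give
`‖f (x + z) - f x‖ ≤ K * (1 + ‖x‖ ^ 2) ^ (β / 2) * (min 1 ‖z‖ * max 1 ‖z‖ ^ β)`.
In dimension `d`, the `p`-th power of the factor in `z` is integrable against `‖z‖ ^ (-(α + d))`:
near the origin because `α < p`, and at infinity because `p * β < α`.
-/

section Weight

variable {E : Type*} [SeminormedAddCommGroup E]

lemma one_add_norm_add_sq_rpow_half_le {β : ℝ} (hβ : 0 ≤ β) (x z : E) :
    (1 + ‖x + z‖ ^ 2) ^ (β / 2) ≤ 2 ^ β * (1 + ‖x‖ ^ 2) ^ (β / 2) * max 1 ‖z‖ ^ β := by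
  have hbase : 1 + ‖x + z‖ ^ 2 ≤ (1 + ‖x‖ ^ 2) * (2 * max 1 ‖z‖) ^ 2 := by
    have hsq : ‖x + z‖ ^ 2 ≤ 2 * (‖x‖ ^ 2 + ‖z‖ ^ 2) :=
      (pow_le_pow_left₀ (norm_nonneg _) (norm_add_le x z) 2).trans add_sq_le
    have hone : 1 ≤ max 1 ‖z‖ ^ 2 := one_le_pow₀ (le_max_left 1 ‖z‖)
    have hz : ‖z‖ ^ 2 ≤ max 1 ‖z‖ ^ 2 := by gcongr; exact le_max_right 1 ‖z‖
    nlinarith [mul_le_mul_of_nonneg_left hone (sq_nonneg ‖x‖)]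
  calc (1 + ‖x + z‖ ^ 2) ^ (β / 2)
      ≤ ((1 + ‖x‖ ^ 2) * (2 * max 1 ‖z‖) ^ 2) ^ (β / 2) := by gcongr
    _ = (1 + ‖x‖ ^ 2) ^ (β / 2) * (2 * max 1 ‖z‖) ^ β := by
        rw [Real.mul_rpow (by positivity) (by positivity),
          ← Real.rpow_natCast_mul (by positivity), Nat.cast_ofNat, mul_div_cancel₀ β two_ne_zero]
    _ = 2 ^ β * (1 + ‖x‖ ^ 2) ^ (β / 2) * max 1 ‖z‖ ^ β := by
        rw [Real.mul_rpow zero_le_two (by positivity)]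
        ring

lemma one_add_norm_sq_rpow_half_le {β : ℝ} (hβ : 0 ≤ β) (x : E) :
    (1 + ‖x‖ ^ 2) ^ (β / 2) ≤ 2 ^ β * (1 + ‖x‖ ^ β) := by
  have hmax : max 1 ‖x‖ ^ β ≤ 1 + ‖x‖ ^ β := by
    rw [Real.rpow_max zero_le_one (norm_nonneg x) hβ, Real.one_rpow]
    exact max_le_add_of_nonneg zero_le_one (by positivity)
  calc (1 + ‖x‖ ^ 2) ^ (β / 2) ≤ 2 ^ β * max 1 ‖x‖ ^ β := by
        simpa using one_add_norm_add_sq_rpow_half_le hβ 0 x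
    _ ≤ 2 ^ β * (1 + ‖x‖ ^ β) := by gcongr

end Weight

section Increment

variable {E F : Type*} {f : E → F} {β C₀ : ℝ}

lemma nonneg_of_norm_le_mul_rpow [SeminormedAddCommGroup E] [SeminormedAddCommGroup F]
    (hfb : ∀ x, ‖f x‖ ≤ C₀ * (1 + ‖x‖ ^ 2) ^ (β / 2)) : 0 ≤ C₀ :=
  nonneg_of_mul_nonneg_left ((norm_nonneg (f 0)).trans (hfb 0)) (by positivity)

lemma norm_sub_le_of_norm_le [SeminormedAddCommGroup E] [SeminormedAddCommGroup F] (hβ : 0 ≤ β)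
    (hfb : ∀ x, ‖f x‖ ≤ C₀ * (1 + ‖x‖ ^ 2) ^ (β / 2)) (x z : E) :
    ‖f (x + z) - f x‖ ≤ 2 * 2 ^ β * C₀ * (1 + ‖x‖ ^ 2) ^ (β / 2) * max 1 ‖z‖ ^ β := by
  have hC₀ : 0 ≤ C₀ := nonneg_of_norm_le_mul_rpow hfb
  have hone : 1 ≤ 2 ^ β * max 1 ‖z‖ ^ β :=
    one_le_mul_of_one_le_of_one_le (Real.one_le_rpow one_le_two hβ)
      (Real.one_le_rpow (le_max_left 1 ‖z‖) hβ)
  set w := (1 + ‖x‖ ^ 2) ^ (β / 2)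
  calc ‖f (x + z) - f x‖ ≤ ‖f (x + z)‖ + ‖f x‖ := norm_sub_le _ _
    _ ≤ C₀ * (2 ^ β * w * max 1 ‖z‖ ^ β) + C₀ * w * 1 := by
        rw [mul_one]
        gcongr
        · exact (hfb _).trans (by gcongr; exact one_add_norm_add_sq_rpow_half_le hβ x z)
        · exact hfb x
    _ ≤ C₀ * (2 ^ β * w * max 1 ‖z‖ ^ β) + C₀ * w * (2 ^ β * max 1 ‖z‖ ^ β) := by
        gcongr
    _ = 2 * 2 ^ β * C₀ * w * max 1 ‖z‖ ^ β := by ring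

variable [NormedAddCommGroup E] [NormedSpace ℝ E] [NormedAddCommGroup F] [NormedSpace ℝ F]

lemma norm_sub_le_of_norm_fderiv_le (hβ : 0 ≤ β) (hf : Differentiable ℝ f)
    (hgb : ∀ x, ‖fderiv ℝ f x‖ ≤ C₀ * (1 + ‖x‖ ^ 2) ^ (β / 2)) (x z : E) :
    ‖f (x + z) - f x‖ ≤ 2 ^ β * C₀ * (1 + ‖x‖ ^ 2) ^ (β / 2) * max 1 ‖z‖ ^ β * ‖z‖ := by
  have hC₀ : 0 ≤ C₀ := nonneg_of_norm_le_mul_rpow hgb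
  have hbound : ∀ y ∈ Metric.closedBall x ‖z‖, ‖fderiv ℝ f y‖ ≤
      2 ^ β * C₀ * (1 + ‖x‖ ^ 2) ^ (β / 2) * max 1 ‖z‖ ^ β := by
    intro y hy
    have hyz : ‖y - x‖ ≤ ‖z‖ := mem_closedBall_iff_norm.1 hy
    calc ‖fderiv ℝ f y‖ ≤ C₀ * (1 + ‖x + (y - x)‖ ^ 2) ^ (β / 2) := by
          simpa only [add_sub_cancel] using hgb y
      _ ≤ C₀ * (2 ^ β * (1 + ‖x‖ ^ 2) ^ (β / 2) * max 1 ‖y - x‖ ^ β) := by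
          gcongr
          exact one_add_norm_add_sq_rpow_half_le hβ x (y - x)
      _ ≤ C₀ * (2 ^ β * (1 + ‖x‖ ^ 2) ^ (β / 2) * max 1 ‖z‖ ^ β) := by gcongr
      _ = 2 ^ β * C₀ * (1 + ‖x‖ ^ 2) ^ (β / 2) * max 1 ‖z‖ ^ β := by ring
  simpa only [add_sub_cancel_left] using
    (convex_closedBall x ‖z‖).norm_image_sub_le_of_norm_fderiv_le (fun y _ => hf y) hbound
      (Metric.mem_closedBall_self (norm_nonneg z))
      (show x + z ∈ Metric.closedBall x ‖z‖ by simp)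

lemma norm_sub_le_min_mul_max_rpow (hβ : 0 ≤ β) (hf : Differentiable ℝ f)
    (hfb : ∀ x, ‖f x‖ ≤ C₀ * (1 + ‖x‖ ^ 2) ^ (β / 2))
    (hgb : ∀ x, ‖fderiv ℝ f x‖ ≤ C₀ * (1 + ‖x‖ ^ 2) ^ (β / 2)) (x z : E) :
    ‖f (x + z) - f x‖ ≤
      2 * 2 ^ β * C₀ * (1 + ‖x‖ ^ 2) ^ (β / 2) * (min 1 ‖z‖ * max 1 ‖z‖ ^ β) := by
  have hC₀ : 0 ≤ C₀ := nonneg_of_norm_le_mul_rpow hfb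
  rcases le_total ‖z‖ 1 with hz | hz
  · calc ‖f (x + z) - f x‖
        ≤ 2 ^ β * C₀ * (1 + ‖x‖ ^ 2) ^ (β / 2) * max 1 ‖z‖ ^ β * ‖z‖ :=
          norm_sub_le_of_norm_fderiv_le hβ hf hgb x z
      _ ≤ 2 * (2 ^ β * C₀ * (1 + ‖x‖ ^ 2) ^ (β / 2) * max 1 ‖z‖ ^ β * ‖z‖) :=
          le_mul_of_one_le_left (by positivity) one_le_two
      _ = _ := by rw [min_eq_right hz]; ring
  · rw [min_eq_left hz, one_mul]
    exact norm_sub_le_of_norm_le hβ hfb x z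

lemma norm_sub_rpow_le {p : ℝ} (hp : 0 ≤ p) (hβ : 0 ≤ β) (hf : Differentiable ℝ f)
    (hfb : ∀ x, ‖f x‖ ≤ C₀ * (1 + ‖x‖ ^ 2) ^ (β / 2))
    (hgb : ∀ x, ‖fderiv ℝ f x‖ ≤ C₀ * (1 + ‖x‖ ^ 2) ^ (β / 2)) (x z : E) :
    ‖f (x + z) - f x‖ ^ p ≤ (2 * 2 ^ β * C₀) ^ p * (2 ^ (p * β) * (1 + ‖x‖ ^ (p * β))) *
      (min 1 ‖z‖ ^ p * max 1 ‖z‖ ^ (p * β)) := by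
  have hC₀ : 0 ≤ C₀ := nonneg_of_norm_le_mul_rpow hfb
  have hmin : 0 ≤ min 1 ‖z‖ := le_min zero_le_one (norm_nonneg z)
  calc ‖f (x + z) - f x‖ ^ p
      ≤ (2 * 2 ^ β * C₀ * (1 + ‖x‖ ^ 2) ^ (β / 2) * (min 1 ‖z‖ * max 1 ‖z‖ ^ β)) ^ p := by
        gcongr
        exact norm_sub_le_min_mul_max_rpow hβ hf hfb hgb x z
    _ = (2 * 2 ^ β * C₀) ^ p * (1 + ‖x‖ ^ 2) ^ (p * β / 2) *
          (min 1 ‖z‖ ^ p * max 1 ‖z‖ ^ (p * β)) := by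
        rw [Real.mul_rpow (by positivity) (by positivity),
          Real.mul_rpow (by positivity) (by positivity), Real.mul_rpow hmin (by positivity),
          ← Real.rpow_mul (by positivity), ← Real.rpow_mul (by positivity), mul_comm p β,
          div_mul_eq_mul_div]
    _ ≤ _ := by
        gcongr
        exact one_add_norm_sq_rpow_half_le (mul_nonneg hp hβ) x

end Increment

lemma integrableOn_Ioi_min_rpow_mul_max_rpow_mul_rpow {a b c : ℝ} (hac : -1 < a + c)
    (hbc : b + c < -1) :
    IntegrableOn (fun t : ℝ => min 1 t ^ a * max 1 t ^ b * t ^ c) (Set.Ioi 0) := by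
  rw [← Set.Ioc_union_Ioi_eq_Ioi zero_le_one]
  refine IntegrableOn.union ?_ ?_
  · have hnear : IntegrableOn (fun t : ℝ => t ^ (a + c)) (Set.Ioc 0 1) :=
      (intervalIntegrable_iff_integrableOn_Ioc_of_le zero_le_one).1
        (intervalIntegral.intervalIntegrable_rpow' hac)
    refine hnear.congr_fun (fun t ht => ?_) measurableSet_Ioc
    simp only [min_eq_right ht.2, max_eq_left ht.2, Real.one_rpow, mul_one, Real.rpow_add ht.1]
  · refine (integrableOn_Ioi_rpow_of_lt hbc zero_lt_one).congr_fun (fun t ht => ?_)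
      measurableSet_Ioi
    have ht1 : 1 ≤ t := (Set.mem_Ioi.1 ht).le
    simp only [min_eq_left ht1, max_eq_right ht1, Real.one_rpow, one_mul,
      Real.rpow_add (zero_lt_one.trans_le ht1)]

section Moment

variable {E F : Type*} [NormedAddCommGroup E] [NormedSpace ℝ E] [Nontrivial E]
  [FiniteDimensional ℝ E] [MeasurableSpace E] [BorelSpace E] (μ : Measure E) [μ.IsAddHaarMeasure]
  [NormedAddCommGroup F] [NormedSpace ℝ F]

open Module (finrank)

lemma integrable_min_rpow_mul_max_rpow_mul_norm_rpow {a b α : ℝ} (ha : α < a) (hb : b < α) :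
    Integrable
      (fun z : E => min 1 ‖z‖ ^ a * max 1 ‖z‖ ^ b * ‖z‖ ^ (-(α + finrank ℝ E))) μ := by
  have hradial : IntegrableOn (fun t : ℝ => min 1 t ^ a * max 1 t ^ b * t ^ (-(α + 1)))
      (Set.Ioi 0) :=
    integrableOn_Ioi_min_rpow_mul_max_rpow_mul_rpow (by linarith) (by linarith)
  refine (integrable_fun_norm_addHaar μ
    (f := fun t : ℝ => min 1 t ^ a * max 1 t ^ b * t ^ (-(α + finrank ℝ E)))).2
    (hradial.congr_fun (fun t (ht : 0 < t) => ?_) measurableSet_Ioi)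
  have hpow : t ^ (-(α + 1)) = t ^ (finrank ℝ E - 1) * t ^ (-(α + finrank ℝ E)) := by
    rw [← Real.rpow_natCast, ← Real.rpow_add ht, Nat.cast_pred Module.finrank_pos]
    congr 1
    ring
  simp only [hpow, smul_eq_mul]
  ring

theorem stmt13_general {α β C₀ p : ℝ} (c : ℝ) (hα0 : 0 < α) (hαp : α < p) (hβ0 : 0 ≤ β)
    (hβ : p * β < α) {f : E → F} (hf : Differentiable ℝ f)
    (hfb : ∀ x, ‖f x‖ ≤ C₀ * (1 + ‖x‖ ^ 2) ^ (β / 2))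
    (hgb : ∀ x, ‖fderiv ℝ f x‖ ≤ C₀ * (1 + ‖x‖ ^ 2) ^ (β / 2)) :
    ∃ C : ℝ, 0 < C ∧ ∀ x : E,
      IntegrableOn (fun z => ‖f (x + z) - f x‖ ^ p * (c * ‖z‖ ^ (-(α + finrank ℝ E))))
        {z | z ≠ 0} μ ∧
      ∫ z in {z | z ≠ 0}, ‖f (x + z) - f x‖ ^ p * (c * ‖z‖ ^ (-(α + finrank ℝ E))) ∂μ
        ≤ C * (1 + ‖x‖ ^ (p * β)) := by
  have hC₀ : 0 ≤ C₀ := nonneg_of_norm_le_mul_rpow hfb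
  let g : E → ℝ := fun z =>
    min 1 ‖z‖ ^ p * max 1 ‖z‖ ^ (p * β) * ‖z‖ ^ (-(α + finrank ℝ E))
  let K : ℝ := |c| * (2 * 2 ^ β * C₀) ^ p * 2 ^ (p * β)
  have hg : IntegrableOn g {z | z ≠ 0} μ :=
    (integrable_min_rpow_mul_max_rpow_mul_norm_rpow μ hαp hβ).integrableOn
  have hI : 0 ≤ ∫ z in {z | z ≠ 0}, g z ∂μ := integral_nonneg fun z => by positivity
  have hbound (x z : E) : ‖‖f (x + z) - f x‖ ^ p * (c * ‖z‖ ^ (-(α + finrank ℝ E)))‖ ≤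
      K * (1 + ‖x‖ ^ (p * β)) * g z := by
    calc _ = ‖f (x + z) - f x‖ ^ p * (|c| * ‖z‖ ^ (-(α + finrank ℝ E))) := by
          rw [Real.norm_eq_abs, abs_mul, abs_mul, abs_of_nonneg (by positivity),
            abs_of_nonneg (by positivity : 0 ≤ ‖z‖ ^ (-(α + finrank ℝ E)))]
      _ ≤ (2 * 2 ^ β * C₀) ^ p * (2 ^ (p * β) * (1 + ‖x‖ ^ (p * β))) *
            (min 1 ‖z‖ ^ p * max 1 ‖z‖ ^ (p * β)) * (|c| * ‖z‖ ^ (-(α + finrank ℝ E))) := by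
          gcongr
          exact norm_sub_rpow_le (hα0.trans hαp).le hβ0 hf hfb hgb x z
      _ = K * (1 + ‖x‖ ^ (p * β)) * g z := by simp only [K, g]; ring
  have hdom (x : E) : IntegrableOn (fun z => K * (1 + ‖x‖ ^ (p * β)) * g z) {z | z ≠ 0} μ :=
    hg.const_mul _
  refine ⟨K * (∫ z in {z | z ≠ 0}, g z ∂μ) + 1,
    add_pos_of_nonneg_of_pos (mul_nonneg (by positivity) hI) zero_lt_one, fun x => ⟨?_, ?_⟩⟩
  · have hinc : Measurable fun z => ‖f (x + z) - f x‖ :=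
      ((hf.continuous.comp (continuous_const_add x)).sub continuous_const).norm.measurable
    exact (hdom x).mono' (Measurable.aestronglyMeasurable (by fun_prop))
      (.of_forall (hbound x))
  · calc _ ≤ ∫ z in {z | z ≠ 0}, K * (1 + ‖x‖ ^ (p * β)) * g z ∂μ :=
          (Real.le_norm_self _).trans (norm_integral_le_of_norm_le (hdom x) (.of_forall (hbound x)))
      _ = K * (∫ z in {z | z ≠ 0}, g z ∂μ) * (1 + ‖x‖ ^ (p * β)) := by
          rw [integral_const_mul]
          ring
      _ ≤ _ := by gcongr; exact le_add_of_nonneg_right zero_le_one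

end Moment

/-- Fourth-moment bound: for `α ∈ (1,2)`, `0 < β < α/4`, and `f ∈ C¹(ℝ^d)` with
`|f(x)| ≤ C₀(1+|x|²)^{β/2}` and `|∇f(x)| ≤ C₀(1+|x|²)^{β/2}`, there is `C > 0` such that
`∫_{ℝ^d∖{0}} [f(x+z) - f(x)]⁴ C_{d,α} |z|^{-(α+d)} dz ≤ C(1+|x|^{4β})` for all `x`,
the integral being finite. -/
theorem stmt13 (d : ℕ) (hd : 1 ≤ d) (α β C₀ : ℝ) (hα1 : 1 < α) (hα2 : α < 2)
    (hβ0 : 0 < β) (hβ : β < α / 4) (hC₀ : 0 < C₀)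
    (f : EuclideanSpace ℝ (Fin d) → ℝ) (hf : ContDiff ℝ 1 f)
    (hfb : ∀ x, |f x| ≤ C₀ * (1 + ‖x‖ ^ 2) ^ (β / 2))
    (hgb : ∀ x, ‖gradient f x‖ ≤ C₀ * (1 + ‖x‖ ^ 2) ^ (β / 2)) :
    ∃ C : ℝ, 0 < C ∧ ∀ x : EuclideanSpace ℝ (Fin d),
      IntegrableOn
        (fun z : EuclideanSpace ℝ (Fin d) => (f (x + z) - f x) ^ 4 *
          ((α * (2 : ℝ) ^ (α - 1) * Real.pi ^ (-(d : ℝ) / 2) *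
            Real.Gamma ((d + α) / 2) / Real.Gamma (1 - α / 2)) * ‖z‖ ^ (-(α + d))))
        {z : EuclideanSpace ℝ (Fin d) | z ≠ 0} ∧
      ∫ z in {z : EuclideanSpace ℝ (Fin d) | z ≠ 0},
          (f (x + z) - f x) ^ 4 *
            ((α * (2 : ℝ) ^ (α - 1) * Real.pi ^ (-(d : ℝ) / 2) *
              Real.Gamma ((d + α) / 2) / Real.Gamma (1 - α / 2)) * ‖z‖ ^ (-(α + d)))
        ≤ C * (1 + ‖x‖ ^ (4 * β)) := by
  have : NeZero d := ⟨by omega⟩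
  simpa [(by decide : Even 4).pow_abs] using stmt13_general volume (p := 4) _ (by linarith)
    (by linarith) hβ0.le (by linarith) (hf.differentiable one_ne_zero) hfb
    (fun x => by simpa [gradient] using hgb x)
end
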